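/- arXiv:1304.5001 — 3 statements merged into one kernel-verified Lean document; each statement's English description precedes it below -/
import Mathlib

section
/- Let n ≥ 3, let A = (a_{ij})_{1≤i,j≤n} be an n × n real array with σ_A² > 0 and ‖a‖ > 0, let π be a permutation of {1,…,n} chosen uniformly at random, and let Y = Σ_{i=1}^n a_{iπ(i)}. Then for all t > e, with c = 8‖a‖, both P(Y − μ_A ≥ t) and P(Y − μ_A ≤ −t) are at most exp(−(t/c)(log t − log log t − σ_A²/c)). -/
open MeasureTheory ProbabilityTheory Real

noncomputable instance (n : ℕ) : MeasurableSpace (Equiv.Perm (Fin n)) := ⊤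

/-- The uniform distribution on the permutations of `{1, …, n}`. -/
noncomputable def uniformPerm (n : ℕ) : Measure (Equiv.Perm (Fin n)) :=
  (PMF.uniformOfFintype (Equiv.Perm (Fin n))).toMeasure

/-- Row mean `a_{i·}`. -/
noncomputable def rowMean (n : ℕ) (a : Fin n → Fin n → ℝ) (i : Fin n) : ℝ :=
  (1 / (n : ℝ)) * ∑ j, a i j

/-- Column mean `a_{·j}`. -/
noncomputable def colMean (n : ℕ) (a : Fin n → Fin n → ℝ) (j : Fin n) : ℝ :=
  (1 / (n : ℝ)) * ∑ i, a i j

/-- Grand mean `a_{··}`. -/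
noncomputable def grandMean (n : ℕ) (a : Fin n → Fin n → ℝ) : ℝ :=
  (1 / (n : ℝ) ^ 2) * ∑ i, ∑ j, a i j

/-- The mean `μ_A = n a_{··}` of the Hoeffding statistic. -/
noncomputable def muA (n : ℕ) (a : Fin n → Fin n → ℝ) : ℝ :=
  n * grandMean n a

/-- The variance `σ_A²` of the Hoeffding statistic. -/
noncomputable def sigmaA2 (n : ℕ) (a : Fin n → Fin n → ℝ) : ℝ :=
  (1 / ((n : ℝ) - 1)) * ∑ i, ∑ j,
    (a i j - rowMean n a i - colMean n a j + grandMean n a) ^ 2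

noncomputable def hoefW (n : ℕ) (b : Fin n → Fin n → ℝ) (p : Equiv.Perm (Fin n)) : ℝ :=
  ∑ i, b i (p i)

lemma hoefW_swap (n : ℕ) (b : Fin n → Fin n → ℝ) (p : Equiv.Perm (Fin n)) (i j : Fin n) :
    hoefW n b p - hoefW n b (p * Equiv.swap i j) =
      b i (p i) + b j (p j) - b i (p j) - b j (p i) := by
  unfold hoefW
  by_cases hij : i = j
  · subst hij; simp
  rw [← Finset.sum_sub_distrib, Finset.sum_eq_add i j hij]
  · simp; ring
  · intro x _ hx
    simp [Equiv.swap_apply_of_ne_of_ne hx.1 hx.2]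
  · simp
  · simp

lemma hoefW_swap_left (n : ℕ) (b : Fin n → Fin n → ℝ) (C : ℝ)
    (hC : ∀ i j k l, b i k + b j l - b i l - b j k ≤ C / 2)
    (p : Equiv.Perm (Fin n)) (x y : Fin n) :
    hoefW n b p ≤ hoefW n b (Equiv.swap x y * p) + C / 2 := by
  have h := hoefW_swap n b p (p⁻¹ x) (p⁻¹ y)
  have e : p * Equiv.swap (p⁻¹ x) (p⁻¹ y) = Equiv.swap x y * p := by
    rw [Equiv.mul_swap_eq_swap_mul]; simp
  rw [e] at h
  have := hC (p⁻¹ x) (p⁻¹ y) (p (p⁻¹ x)) (p (p⁻¹ y))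
  linarith

lemma exists_tau (n : ℕ) (b : Fin n → Fin n → ℝ) (C : ℝ)
    (hC : ∀ i j k l, b i k + b j l - b i l - b j k ≤ C / 2)
    (k l k' l' : Fin n) (hkl : k ≠ l) (hkl' : k' ≠ l') :
    ∃ τ : Equiv.Perm (Fin n), τ k = k' ∧ τ l = l' ∧
      ∀ p, hoefW n b p ≤ hoefW n b (τ * p) + C := by
  refine ⟨Equiv.swap (Equiv.swap k k' l) l' * Equiv.swap k k', ?_, ?_, ?_⟩
  · rw [Equiv.Perm.mul_apply, Equiv.swap_apply_left, Equiv.swap_apply_of_ne_of_ne _ hkl']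
    intro h
    have : Equiv.swap k k' k = Equiv.swap k k' l := by rw [← h]; simp
    exact hkl ((Equiv.swap k k').injective this)
  · simp
  · intro p
    have h1 := hoefW_swap_left n b C hC p k k'
    have h2 := hoefW_swap_left n b C hC (Equiv.swap k k' * p) (Equiv.swap k k' l) l'
    rw [mul_assoc]
    linarith

lemma cond_bound (n : ℕ) (b : Fin n → Fin n → ℝ) (C : ℝ)
    (hC : ∀ i j k l, b i k + b j l - b i l - b j k ≤ C / 2) (s : ℝ) (hs : 0 ≤ s)
    (i j k l : Fin n) (hkl : k ≠ l) :
    ((n : ℝ) * (n - 1)) * ∑ p : Equiv.Perm (Fin n),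
        (if p i = k ∧ p j = l then Real.exp (s * hoefW n b p) else 0) ≤
      Real.exp (C * s) * ∑ p : Equiv.Perm (Fin n), Real.exp (s * hoefW n b p) := by
  have key : ∀ q ∈ (Finset.univ : Finset (Fin n)).offDiag,
      ∑ p : Equiv.Perm (Fin n),
        (if p i = k ∧ p j = l then Real.exp (s * hoefW n b p) else 0) ≤
      Real.exp (C * s) * ∑ p : Equiv.Perm (Fin n),
        (if p i = q.1 ∧ p j = q.2 then Real.exp (s * hoefW n b p) else 0) := by
    rintro ⟨k', l'⟩ hq
    have hkl' : k' ≠ l' := by simpa using hq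
    obtain ⟨τ, h1, h2, h3⟩ := exists_tau n b C hC k l k' l' hkl hkl'
    rw [← Equiv.sum_comp (Equiv.mulLeft τ) (fun p : Equiv.Perm (Fin n) =>
        (if p i = k' ∧ p j = l' then Real.exp (s * hoefW n b p) else 0)), Finset.mul_sum]
    refine Finset.sum_le_sum fun p _ => ?_
    have e1 : τ (p i) = k' ↔ p i = k := by rw [← h1]; exact τ.injective.eq_iff
    have e2 : τ (p j) = l' ↔ p j = l := by rw [← h2]; exact τ.injective.eq_iff
    simp only [Equiv.coe_mulLeft, Equiv.Perm.mul_apply, e1, e2]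
    split_ifs with h
    · rw [← Real.exp_add]
      apply Real.exp_le_exp.mpr
      nlinarith [h3 p]
    · simp
  have hsum := Finset.sum_le_sum key
  rw [Finset.sum_const, Finset.offDiag_card, ← Finset.mul_sum, Finset.sum_comm] at hsum
  have hcard : ((Finset.univ : Finset (Fin n)).card * (Finset.univ : Finset (Fin n)).card -
      (Finset.univ : Finset (Fin n)).card : ℕ) = ((n : ℝ) * (n - 1)) := by
    rw [Finset.card_univ, Fintype.card_fin, Nat.cast_sub (Nat.le_mul_self n)]
    push_cast; ring
  rw [nsmul_eq_mul, hcard] at hsum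
  refine hsum.trans ?_
  gcongr with p
  calc _ ≤ ∑ q : Fin n × Fin n, (if p i = q.1 ∧ p j = q.2 then Real.exp (s * hoefW n b p) else 0) := by
        apply Finset.sum_le_sum_of_subset_of_nonneg (Finset.subset_univ _)
        intro q _ _
        positivity
    _ = ∑ q : Fin n × Fin n, (if q = (p i, p j) then Real.exp (s * hoefW n b p) else 0) := by
        refine Finset.sum_congr rfl fun q _ => ?_
        congr 1
        rw [Prod.ext_iff]; simp [eq_comm]
    _ ≤ _ := by simp

lemma trap (x y : ℝ) : (x - y) * (Real.exp x - Real.exp y) ≤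
    (x - y) ^ 2 * ((Real.exp x + Real.exp y) / 2) := by
  have main : ∀ u : ℝ, 0 ≤ u → Real.sinh u ≤ u * Real.cosh u := by
    have hd : ∀ u : ℝ, HasDerivAt (fun u => u * Real.cosh u - Real.sinh u) (u * Real.sinh u) u := by
      intro u
      have := ((hasDerivAt_id u).mul (Real.hasDerivAt_cosh u)).sub (Real.hasDerivAt_sinh u)
      exact this.congr_deriv (by simp)
    have hm : MonotoneOn (fun u => u * Real.cosh u - Real.sinh u) (Set.Ici 0) := by
      apply monotoneOn_of_deriv_nonneg (convex_Ici 0)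
      · exact fun u _ => (hd u).continuousAt.continuousWithinAt
      · exact fun u _ => (hd u).differentiableAt.differentiableWithinAt
      · intro u hu
        rw [(hd u).deriv]
        simp at hu
        exact mul_nonneg hu.le (Real.sinh_nonneg_iff.mpr hu.le)
    intro u hu
    have := hm (by simp : (0:ℝ) ∈ Set.Ici 0) (by simpa using hu) hu
    simp at this
    linarith
  have ord : ∀ x y : ℝ, y ≤ x → (x - y) * (Real.exp x - Real.exp y) ≤
    (x - y) ^ 2 * ((Real.exp x + Real.exp y) / 2) := by
    intro x y h
    have hm := main ((x - y) / 2) (by linarith)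
    rw [Real.sinh_eq, Real.cosh_eq] at hm
    have ex : Real.exp x = Real.exp ((x + y) / 2) * Real.exp ((x - y) / 2) := by
      rw [← Real.exp_add]; congr 1; ring
    have ey : Real.exp y = Real.exp ((x + y) / 2) * Real.exp (-((x - y) / 2)) := by
      rw [← Real.exp_add]; congr 1; ring
    rw [ex, ey]
    have hp : 0 ≤ (x - y) * Real.exp ((x + y) / 2) :=
      mul_nonneg (by linarith) (Real.exp_pos _).le
    have := mul_le_mul_of_nonneg_left hm hp
    nlinarith [this]
  rcases le_total y x with h | h
  · exact ord x y h
  · have := ord y x h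
    nlinarith [this]

lemma sum_d_sq (n : ℕ) (b : Fin n → Fin n → ℝ)
    (hr : ∀ i, ∑ j, b i j = 0) (hc : ∀ j, ∑ i, b i j = 0) :
    ∑ i, ∑ j, ∑ k, ∑ l, (b i k + b j l - b i l - b j k) ^ 2 =
      4 * (n : ℝ) ^ 2 * ∑ i, ∑ j, b i j ^ 2 := by
  have h1 : ∀ i j, ∑ k, ∑ l, (b i k + b j l - b i l - b j k) ^ 2 =
      2 * n * (∑ k, b i k ^ 2) + 2 * n * (∑ k, b j k ^ 2) - 4 * n * ∑ k, b i k * b j k := by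
    intro i j
    have : ∀ k l, (b i k + b j l - b i l - b j k) ^ 2 =
        (b i k ^ 2 + b j k ^ 2 - 2 * (b i k * b j k)) + (b i l ^ 2 + b j l ^ 2 - 2 * (b i l * b j l))
         + (2 * (b i k - b j k)) * (b j l - b i l) := by intro k l; ring
    simp only [this, Finset.sum_add_distrib, Finset.sum_sub_distrib, ← Finset.mul_sum, hr,
      Finset.sum_const, Finset.card_univ, Fintype.card_fin, nsmul_eq_mul]
    have hx : ∑ x, b i x * ((n : ℝ) * b j x) = n * ∑ x, b i x * b j x := by
      rw [Finset.mul_sum]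
      exact Finset.sum_congr rfl fun x _ => by ring
    simp only [hx, sub_self, mul_zero, Finset.sum_const_zero]
    ring
  simp only [h1, Finset.sum_add_distrib, Finset.sum_sub_distrib, ← Finset.mul_sum,
      Finset.sum_const, Finset.card_univ, Fintype.card_fin, nsmul_eq_mul]
  have h2 : ∑ i, ∑ j, ∑ k, b i k * b j k = 0 := by
    apply Finset.sum_eq_zero
    intro i _
    rw [Finset.sum_comm]
    simp only [← Finset.mul_sum, hc, mul_zero, Finset.sum_const_zero]
  rw [h2]; ring

lemma stein_sum (n : ℕ) (b : Fin n → Fin n → ℝ)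
    (hr : ∀ i, ∑ j, b i j = 0) (p : Equiv.Perm (Fin n)) :
    ∑ i, ∑ j, (b i (p i) + b j (p j) - b i (p j) - b j (p i)) = 2 * n * hoefW n b p := by
  have h1 : ∀ i, ∑ j, b i (p j) = 0 := fun i => by rw [Equiv.sum_comp p (b i)]; exact hr i
  have h2 : ∑ i, ∑ j, b j (p i) = 0 := by rw [Finset.sum_comm]; simp [h1]
  simp only [Finset.sum_add_distrib, Finset.sum_sub_distrib, h1, h2,
      Finset.sum_const, Finset.card_univ, Fintype.card_fin, nsmul_eq_mul, ← Finset.mul_sum]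
  unfold hoefW
  simp; ring

lemma pair_bound (n : ℕ) (b : Fin n → Fin n → ℝ) (s : ℝ) (hs : 0 < s) (i j : Fin n) :
    ∑ p : Equiv.Perm (Fin n), (b i (p i) + b j (p j) - b i (p j) - b j (p i)) *
        Real.exp (s * hoefW n b p) ≤
      s / 2 * ∑ p : Equiv.Perm (Fin n), (b i (p i) + b j (p j) - b i (p j) - b j (p i)) ^ 2 *
        Real.exp (s * hoefW n b p) := by
  set D : Equiv.Perm (Fin n) → ℝ := fun p => b i (p i) + b j (p j) - b i (p j) - b j (p i) with hD
  set f : Equiv.Perm (Fin n) → ℝ := fun p => Real.exp (s * hoefW n b p) with hf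
  have hDs : ∀ p, D (p * Equiv.swap i j) = - D p := by intro p; simp [hD]; ring
  have e1 : ∑ p, D p * f p = ∑ p, -D p * f (p * Equiv.swap i j) := by
    rw [← Equiv.sum_comp (Equiv.mulRight (Equiv.swap i j))]
    simp [hDs]
  have e2 : ∑ p, D p ^ 2 * f p = ∑ p, D p ^ 2 * f (p * Equiv.swap i j) := by
    rw [← Equiv.sum_comp (Equiv.mulRight (Equiv.swap i j))]
    simp [hDs]
  have e3 : ∀ p, D p * f p + -D p * f (p * Equiv.swap i j) ≤
      s / 2 * (D p ^ 2 * f p + D p ^ 2 * f (p * Equiv.swap i j)) := by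
    intro p
    have h := trap (s * hoefW n b p) (s * hoefW n b (p * Equiv.swap i j))
    rw [← mul_sub, hoefW_swap] at h
    have h' : s * (D p * (f p - f (p * Equiv.swap i j))) ≤
        s * (s * (D p ^ 2 * ((f p + f (p * Equiv.swap i j)) / 2))) := by
      simp only [hD, hf]; linarith
    have := le_of_mul_le_mul_left h' hs
    linarith
  have e4 := Finset.sum_le_sum (fun p (_ : p ∈ Finset.univ) => e3 p)
  rw [← Finset.mul_sum, Finset.sum_add_distrib, Finset.sum_add_distrib, ← e1, ← e2] at e4
  change ∑ p, D p * f p ≤ s / 2 * ∑ p, D p ^ 2 * f p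
  linarith

lemma sq_bound (n : ℕ) (b : Fin n → Fin n → ℝ) (C : ℝ)
    (hC : ∀ i j k l, b i k + b j l - b i l - b j k ≤ C / 2) (s : ℝ) (hs : 0 ≤ s)
    (i j : Fin n) :
    ((n : ℝ) * (n - 1)) * ∑ p : Equiv.Perm (Fin n),
        (b i (p i) + b j (p j) - b i (p j) - b j (p i)) ^ 2 * Real.exp (s * hoefW n b p) ≤
      (∑ k, ∑ l, (b i k + b j l - b i l - b j k) ^ 2) *
      (Real.exp (C * s) * ∑ p : Equiv.Perm (Fin n), Real.exp (s * hoefW n b p)) := by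
  have e : ∑ p : Equiv.Perm (Fin n),
        (b i (p i) + b j (p j) - b i (p j) - b j (p i)) ^ 2 * Real.exp (s * hoefW n b p) =
      ∑ k, ∑ l, (b i k + b j l - b i l - b j k) ^ 2 * ∑ p : Equiv.Perm (Fin n),
        (if p i = k ∧ p j = l then Real.exp (s * hoefW n b p) else 0) := by
    simp only [Finset.mul_sum]
    rw [Finset.sum_congr rfl (fun k _ => Finset.sum_comm), Finset.sum_comm]
    refine Finset.sum_congr rfl fun p _ => ?_
    simp [ite_and]
  rw [e, Finset.mul_sum, Finset.sum_mul]
  refine Finset.sum_le_sum fun k _ => ?_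
  rw [Finset.mul_sum, Finset.sum_mul]
  refine Finset.sum_le_sum fun l _ => ?_
  by_cases hkl : k = l
  · subst hkl
    have : (b i k + b j k - b i k - b j k) = 0 := by ring
    simp [this]
  · have := mul_le_mul_of_nonneg_left (cond_bound n b C hC s hs i j k l hkl)
      (sq_nonneg (b i k + b j l - b i l - b j k))
    linarith

lemma deriv_bound (n : ℕ) (hn : 2 ≤ n) (b : Fin n → Fin n → ℝ)
    (hr : ∀ i, ∑ j, b i j = 0) (hc : ∀ j, ∑ i, b i j = 0) (C : ℝ)
    (hC : ∀ i j k l, b i k + b j l - b i l - b j k ≤ C / 2) (s : ℝ) (hs : 0 < s) :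
    ∑ p : Equiv.Perm (Fin n), hoefW n b p * Real.exp (s * hoefW n b p) ≤
      (1 / ((n : ℝ) - 1) * ∑ i, ∑ j, b i j ^ 2) * s * Real.exp (C * s) *
        ∑ p : Equiv.Perm (Fin n), Real.exp (s * hoefW n b p) := by
  have hn' : (2 : ℝ) ≤ n := by exact_mod_cast hn
  set M := ∑ p : Equiv.Perm (Fin n), Real.exp (s * hoefW n b p)
  set L := ∑ p : Equiv.Perm (Fin n), hoefW n b p * Real.exp (s * hoefW n b p) with hL
  have h1 : 2 * n * L = ∑ i, ∑ j, ∑ p : Equiv.Perm (Fin n),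
      (b i (p i) + b j (p j) - b i (p j) - b j (p i)) * Real.exp (s * hoefW n b p) := by
    rw [Finset.sum_congr rfl (fun k _ => Finset.sum_comm), Finset.sum_comm]
    simp only [← Finset.sum_mul, stein_sum n b hr]
    rw [hL, Finset.mul_sum]
    exact Finset.sum_congr rfl fun p _ => by ring
  have h2 : ((n : ℝ) * (n - 1)) * (2 * n * L) ≤ ∑ i, ∑ j, s / 2 *
      ((∑ k, ∑ l, (b i k + b j l - b i l - b j k) ^ 2) * (Real.exp (C * s) * M)) := by
    rw [h1, Finset.mul_sum]
    refine Finset.sum_le_sum fun i _ => ?_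
    rw [Finset.mul_sum]
    refine Finset.sum_le_sum fun j _ => ?_
    have hnn : 0 ≤ (n : ℝ) * (n - 1) := by nlinarith
    have a1 := mul_le_mul_of_nonneg_left (pair_bound n b s hs i j) hnn
    have a2 := mul_le_mul_of_nonneg_left (sq_bound n b C hC s hs.le i j) (by positivity : 0 ≤ s / 2)
    linarith
  simp only [← Finset.mul_sum, ← Finset.sum_mul] at h2
  rw [sum_d_sq n b hr hc] at h2
  have hpos : 0 < 2 * (n : ℝ) ^ 2 := by positivity
  have h3 : ((n : ℝ) - 1) * L ≤ (∑ i, ∑ j, b i j ^ 2) * s * Real.exp (C * s) * M := by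
    refine le_of_mul_le_mul_left ?_ hpos
    linarith
  have hn1 : 0 < (n : ℝ) - 1 := by linarith
  rw [mul_comm, ← le_div_iff₀ hn1] at h3
  refine h3.trans (le_of_eq ?_)
  field_simp

lemma mgf_bound (n : ℕ) (hn : 2 ≤ n) (b : Fin n → Fin n → ℝ)
    (hr : ∀ i, ∑ j, b i j = 0) (hc : ∀ j, ∑ i, b i j = 0) (C : ℝ) (hCp : 0 < C)
    (hC : ∀ i j k l, b i k + b j l - b i l - b j k ≤ C / 2) (S : ℝ)
    (hS : S = 1 / ((n : ℝ) - 1) * ∑ i, ∑ j, b i j ^ 2) (s : ℝ) (hs : 0 ≤ s) :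
    ∑ p : Equiv.Perm (Fin n), Real.exp (s * hoefW n b p) ≤
      (n.factorial : ℝ) * Real.exp (S / C ^ 2 * (Real.exp (C * s) * (C * s - 1) + 1)) := by
  set M : ℝ → ℝ := fun s => ∑ p : Equiv.Perm (Fin n), Real.exp (s * hoefW n b p) with hM
  set G : ℝ → ℝ := fun s => S / C ^ 2 * (Real.exp (C * s) * (C * s - 1) + 1) with hG
  have hMd : ∀ s, HasDerivAt M
      (∑ p : Equiv.Perm (Fin n), hoefW n b p * Real.exp (s * hoefW n b p)) s := by
    intro s
    apply HasDerivAt.fun_sum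
    intro p _
    have := ((hasDerivAt_id s).mul_const (hoefW n b p)).exp
    exact this.congr_deriv (by simp; ring)
  have hGd : ∀ s, HasDerivAt G (S * s * Real.exp (C * s)) s := by
    intro s
    have h0 : HasDerivAt (fun s : ℝ => C * s) C s := by
      simpa using (hasDerivAt_id s).const_mul C
    have := ((h0.exp.mul (h0.sub_const 1)).add_const 1).const_mul (S / C ^ 2)
    exact this.congr_deriv (by field_simp; ring)
  have hd : ∀ s, HasDerivAt (fun s => M s * Real.exp (-G s))
      ((∑ p : Equiv.Perm (Fin n), hoefW n b p * Real.exp (s * hoefW n b p)) * Real.exp (-G s) +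
        M s * (Real.exp (-G s) * -(S * s * Real.exp (C * s)))) s :=
    fun s => (hMd s).mul ((hGd s).neg.exp)
  have hanti : AntitoneOn (fun s => M s * Real.exp (-G s)) (Set.Ici 0) := by
    apply antitoneOn_of_deriv_nonpos (convex_Ici 0)
    · exact fun u _ => (hd u).continuousAt.continuousWithinAt
    · exact fun u _ => (hd u).differentiableAt.differentiableWithinAt
    · intro u hu
      rw [(hd u).deriv]
      simp at hu
      have h := deriv_bound n hn b hr hc C hC u hu
      rw [← hS] at h
      have := mul_le_mul_of_nonneg_right h (Real.exp_pos (-G u)).le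
      change _ + (∑ p : Equiv.Perm (Fin n), Real.exp (u * hoefW n b p)) * _ ≤ 0
      linarith
  have h := hanti (by simp : (0:ℝ) ∈ Set.Ici 0) (by simpa using hs) hs
  have h0 : M 0 * Real.exp (-G 0) = n.factorial := by
    simp [hM, hG, Fintype.card_perm]
  simp only [h0] at h
  rw [Real.exp_neg, ← div_eq_mul_inv, div_le_iff₀ (Real.exp_pos _)] at h
  exact h

lemma tail_count (n : ℕ) (hn : 2 ≤ n) (b : Fin n → Fin n → ℝ)
    (hr : ∀ i, ∑ j, b i j = 0) (hc : ∀ j, ∑ i, b i j = 0) (C : ℝ) (hCp : 0 < C)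
    (hC : ∀ i j k l, b i k + b j l - b i l - b j k ≤ C / 2) (S : ℝ)
    (hS : S = 1 / ((n : ℝ) - 1) * ∑ i, ∑ j, b i j ^ 2) (hS0 : 0 < S)
    (t : ℝ) (ht : Real.exp 1 < t) :
    ((uniformPerm n) {p | t ≤ hoefW n b p}).toReal ≤
      Real.exp (-(t / C) * (Real.log t - Real.log (Real.log t) - S / C)) := by
  have ht0 : 0 < t := (Real.exp_pos 1).trans ht
  have hl1 : 1 < Real.log t := by rwa [Real.lt_log_iff_exp_lt ht0]
  have hll : 0 < Real.log (Real.log t) := Real.log_pos hl1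
  have hlt : Real.log t ≤ t := (Real.log_le_sub_one_of_pos ht0).trans (by linarith)
  have hlll : Real.log (Real.log t) ≤ Real.log t := Real.log_le_log (by linarith) hlt
  set s := (Real.log t - Real.log (Real.log t)) / C with hs
  have hs0 : 0 ≤ s := div_nonneg (by linarith) hCp.le
  have hCs : C * s = Real.log t - Real.log (Real.log t) := by rw [hs]; field_simp
  have hexp : Real.exp (C * s) = t / Real.log t := by
    rw [hCs, Real.exp_sub, Real.exp_log ht0, Real.exp_log (by linarith)]
  have hm := mgf_bound n hn b hr hc C hCp hC S hS s hs0
  have hfac : (0 : ℝ) < n.factorial := by positivity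
  classical
  have hP : ((uniformPerm n) {p | t ≤ hoefW n b p}).toReal =
      ((Finset.univ.filter (fun p => t ≤ hoefW n b p)).card : ℝ) / n.factorial := by
    unfold uniformPerm
    rw [PMF.toMeasure_uniformOfFintype_apply _ (MeasurableSpace.measurableSet_top)]
    simp [Fintype.card_perm, Fintype.card_subtype]
  have hcount : ((Finset.univ.filter (fun p => t ≤ hoefW n b p)).card : ℝ) * Real.exp (s * t) ≤
      ∑ p : Equiv.Perm (Fin n), Real.exp (s * hoefW n b p) := by
    rw [← nsmul_eq_mul, ← Finset.sum_const]
    calc _ ≤ ∑ p ∈ Finset.univ.filter (fun p => t ≤ hoefW n b p), Real.exp (s * hoefW n b p) := by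
          refine Finset.sum_le_sum fun p hp => ?_
          simp at hp
          gcongr
      _ ≤ _ := Finset.sum_le_sum_of_subset_of_nonneg (Finset.subset_univ _)
          (fun _ _ _ => (Real.exp_pos _).le)
  have hb : Real.exp (C * s) * (C * s - 1) + 1 ≤ t := by
    rw [hexp, hCs]
    have h1 : 1 ≤ t / Real.log t := by rw [le_div_iff₀ (by linarith)]; linarith
    have h2 : t / Real.log t * Real.log t = t := by
      have : Real.log t ≠ 0 := by linarith
      field_simp
    nlinarith [mul_nonneg (by linarith : 0 ≤ t / Real.log t) hll.le]
  rw [hP, div_le_iff₀ hfac]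
  have h3 := (hcount.trans hm)
  rw [← le_div_iff₀ (Real.exp_pos _), mul_div_assoc, ← Real.exp_sub] at h3
  refine h3.trans ?_
  rw [mul_comm]
  gcongr
  have h4 := mul_le_mul_of_nonneg_left hb (by positivity : 0 ≤ S / C ^ 2)
  have h5 : -(t / C) * (Real.log t - Real.log (Real.log t) - S / C) = S / C ^ 2 * t - s * t := by
    rw [hs]; field_simp; ring
  rw [h5]
  linarith

lemma bcent_row (n : ℕ) (hn : n ≠ 0) (a : Fin n → Fin n → ℝ) (i : Fin n) :
    ∑ j, (a i j - rowMean n a i - colMean n a j + grandMean n a) = 0 := by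
  have : (n : ℝ) ≠ 0 := by exact_mod_cast hn
  have h := Finset.sum_comm (s := (Finset.univ : Finset (Fin n))) (t := Finset.univ) (f := a)
  simp only [Finset.sum_add_distrib, Finset.sum_sub_distrib, rowMean, colMean, grandMean,
    Finset.sum_const, Finset.card_univ, Fintype.card_fin, nsmul_eq_mul, ← Finset.mul_sum, h]
  field_simp; ring

lemma bcent_col (n : ℕ) (hn : n ≠ 0) (a : Fin n → Fin n → ℝ) (j : Fin n) :
    ∑ i, (a i j - rowMean n a i - colMean n a j + grandMean n a) = 0 := by
  have : (n : ℝ) ≠ 0 := by exact_mod_cast hn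
  simp only [Finset.sum_add_distrib, Finset.sum_sub_distrib, rowMean, colMean, grandMean,
    Finset.sum_const, Finset.card_univ, Fintype.card_fin, nsmul_eq_mul, ← Finset.mul_sum]
  field_simp; ring

lemma bcent_W (n : ℕ) (hn : n ≠ 0) (a : Fin n → Fin n → ℝ) (p : Equiv.Perm (Fin n)) :
    hoefW n (fun i j => a i j - rowMean n a i - colMean n a j + grandMean n a) p =
      (∑ i, a i (p i)) - muA n a := by
  have : (n : ℝ) ≠ 0 := by exact_mod_cast hn
  have h := Finset.sum_comm (s := (Finset.univ : Finset (Fin n))) (t := Finset.univ) (f := a)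
  unfold hoefW
  simp only [Finset.sum_add_distrib, Finset.sum_sub_distrib]
  rw [Equiv.sum_comp p (colMean n a)]
  simp only [rowMean, colMean, grandMean, muA,
    Finset.sum_const, Finset.card_univ, Fintype.card_fin, nsmul_eq_mul, ← Finset.mul_sum, h]
  field_simp; ring

theorem hoeffding_concentration_tlogt (n : ℕ) (hn : 3 ≤ n) (a : Fin n → Fin n → ℝ)
    (hσ : 0 < sigmaA2 n a)
    (normA : ℝ) (hnormpos : 0 < normA)
    (hnorm : IsGreatest {x : ℝ | ∃ i j, x = |a i j - rowMean n a i|} normA) :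
    ∀ t : ℝ, Real.exp 1 < t →
      ((uniformPerm n) {p | t ≤ (∑ i, a i (p i)) - muA n a}).toReal ≤
          Real.exp (-(t / (8 * normA)) *
            (Real.log t - Real.log (Real.log t) - sigmaA2 n a / (8 * normA))) ∧
        ((uniformPerm n) {p | (∑ i, a i (p i)) - muA n a ≤ -t}).toReal ≤
          Real.exp (-(t / (8 * normA)) *
            (Real.log t - Real.log (Real.log t) - sigmaA2 n a / (8 * normA))) := by
  intro t ht
  have hn0 : n ≠ 0 := by omega
  have hK : ∀ i j, |a i j - rowMean n a i| ≤ normA := fun i j => hnorm.2 ⟨i, j, rfl⟩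
  have hCa : ∀ i j k l, a i k + a j l - a i l - a j k ≤ 8 * normA / 2 := by
    intro i j k l
    have h1 := abs_le.mp (hK i k)
    have h2 := abs_le.mp (hK j l)
    have h3 := abs_le.mp (hK i l)
    have h4 := abs_le.mp (hK j k)
    linarith [h1.2, h2.2, h3.1, h4.1]
  set b : Fin n → Fin n → ℝ :=
    fun i j => a i j - rowMean n a i - colMean n a j + grandMean n a with hb
  have hr : ∀ i, ∑ j, b i j = 0 := bcent_row n hn0 a
  have hc : ∀ j, ∑ i, b i j = 0 := bcent_col n hn0 a
  have hW : ∀ p, hoefW n b p = (∑ i, a i (p i)) - muA n a := bcent_W n hn0 a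
  constructor
  · have := tail_count n (by omega) b hr hc (8 * normA) (by positivity)
      (fun i j k l => by have := hCa i j k l; simp only [hb]; linarith) (sigmaA2 n a) rfl hσ t ht
    simpa only [hW] using this
  · have := tail_count n (by omega) (fun i j => - b i j) (fun i => by simp [hr])
      (fun j => by simp [hc]) (8 * normA) (by positivity)
      (fun i j k l => by have := hCa i j l k; simp only [hb]; linarith) (sigmaA2 n a)
      (by simp only [neg_sq]; rfl) hσ t ht
    have hW' : ∀ p, hoefW n (fun i j => - b i j) p = - ((∑ i, a i (p i)) - muA n a) := by
      intro p; rw [← hW]; simp [hoefW]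
    simpa only [hW', le_neg] using this
end

section
/- Let n ≥ 5 be even and let (a_{ij})_{1≤i,j≤n} be a real array satisfying a_{ij} = a_{ji} for all i ≠ j, with σ_ι² > 0. Let π be chosen uniformly at random from the set of fixed point free involutions of {1,…,n} (permutations all of whose cycles have length 2), and let Y = Σ_{i=1}^n a_{iπ(i)}. Then for all t ≥ 0, both P(Y − μ ≥ t) and P(Y − μ ≤ −t) are at most exp(−t² / (2(σ_ι² + 24 a_o t))), where μ = (n−2) a_{oo}, σ_ι² = (2(n−2)/((n−1)(n−3))) Σ_{i≠j} (a_{ij} − 2a_{io} + a_{oo})², and a_o = max_{i≠j} |a_{ij} − 2a_{io} + a_{oo}|. -/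
open MeasureTheory ProbabilityTheory Real

instance (n : ℕ) : MeasurableSingletonClass (Equiv.Perm (Fin n)) := ⟨fun _ => trivial⟩

/-- The set of fixed point free involutions of `{1,…,n}`: permutations all of whose
cycles have length two. -/
def fpfInvolutions (n : ℕ) : Set (Equiv.Perm (Fin n)) :=
  {p | ∀ i, p i ≠ i ∧ p (p i) = i}

/-- `a_{io} = (1/(n-2)) ∑_{j ≠ i} a_{ij}`. -/
noncomputable def aio (n : ℕ) (a : Fin n → Fin n → ℝ) (i : Fin n) : ℝ :=
  (1 / ((n : ℝ) - 2)) * ∑ j ∈ Finset.univ.filter (· ≠ i), a i j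

/-- `a_{oo} = (1/((n-1)(n-2))) ∑_{i ≠ j} a_{ij}`. -/
noncomputable def aoo (n : ℕ) (a : Fin n → Fin n → ℝ) : ℝ :=
  (1 / (((n : ℝ) - 1) * ((n : ℝ) - 2))) * ∑ i, ∑ j ∈ Finset.univ.filter (· ≠ i), a i j

/-- The variance `σ_ι²` of the Hoeffding statistic over uniform fixed point free
involutions. -/
noncomputable def sigmaIota2 (n : ℕ) (a : Fin n → Fin n → ℝ) : ℝ :=
  (2 * ((n : ℝ) - 2) / (((n : ℝ) - 1) * ((n : ℝ) - 3))) *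
    ∑ i, ∑ j ∈ Finset.univ.filter (· ≠ i), (a i j - 2 * aio n a i + aoo n a) ^ 2


namespace HoefInv
open Finset

def MM (n : ℕ) : Finset (Equiv.Perm (Fin n)) :=
  Finset.univ.filter (fun p => ∀ i, p i ≠ i ∧ p (p i) = i)

def W {n : ℕ} (d : Fin n → Fin n → ℝ) (p : Equiv.Perm (Fin n)) : ℝ := ∑ i, d i (p i)

def cj {n : ℕ} (i j : Fin n) (p : Equiv.Perm (Fin n)) : Equiv.Perm (Fin n) :=
  Equiv.swap i j * p * Equiv.swap i j

lemma cj_cj {n : ℕ} (i j : Fin n) (p : Equiv.Perm (Fin n)) : cj i j (cj i j p) = p := by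
  ext x; simp [cj]

lemma cj_apply {n : ℕ} (i j : Fin n) (p : Equiv.Perm (Fin n)) (x : Fin n) :
    cj i j p x = Equiv.swap i j (p (Equiv.swap i j x)) := by
  simp [cj]

lemma cj_mem {n : ℕ} (i j : Fin n) (p : Equiv.Perm (Fin n)) (hp : p ∈ MM n) :
    cj i j p ∈ MM n := by
  simp only [MM, mem_filter, mem_univ, true_and] at hp ⊢
  intro x
  constructor
  · rw [cj_apply]
    intro h
    apply (hp (Equiv.swap i j x)).1
    have h' := congrArg (Equiv.swap i j) h
    simpa using h'
  · rw [cj_apply, cj_apply]; simp [hp]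

lemma sum_cj {n : ℕ} (i j : Fin n) (f : Equiv.Perm (Fin n) → ℝ) :
    ∑ p ∈ MM n, f (cj i j p) = ∑ p ∈ MM n, f p :=
  Finset.sum_bij' (fun p _ => cj i j p) (fun p _ => cj i j p)
    (fun p hp => cj_mem i j p hp) (fun p hp => cj_mem i j p hp)
    (fun p _ => cj_cj i j p) (fun p _ => cj_cj i j p) (fun _ _ => rfl)

lemma W_cj {n : ℕ} (d : Fin n → Fin n → ℝ) (i j : Fin n) (p : Equiv.Perm (Fin n)) :
    W d (cj i j p) = ∑ x, d (Equiv.swap i j x) (Equiv.swap i j (p x)) := by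
  unfold W
  rw [← Equiv.sum_comp (Equiv.swap i j)]
  simp [cj_apply]

lemma diff_generic {n : ℕ} (d : Fin n → Fin n → ℝ) (hs : ∀ i j, d i j = d j i)
    (i j : Fin n) (p : Equiv.Perm (Fin n)) (hp : p ∈ MM n) (hij : i ≠ j) (hpi : p i ≠ j) :
    W d p - W d (cj i j p) = 2 * ((d i (p i) - d j (p i)) - (d i (p j) - d j (p j))) := by
  simp only [MM, mem_filter, mem_univ, true_and] at hp
  have hpj : p j ≠ i := by
    intro h; apply hpi; rw [← h]; exact (hp j).2
  have h1 := (hp i).1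
  have h2 := (hp j).1
  have h3 : p i ≠ p j := fun h => hij (p.injective h)
  rw [W_cj, W, ← Finset.sum_sub_distrib]
  rw [← Finset.sum_subset (Finset.subset_univ ({i, j, p i, p j} : Finset (Fin n)))]
  · rw [Finset.sum_insert, Finset.sum_insert, Finset.sum_insert, Finset.sum_singleton]
    · simp only [(hp i).2, (hp j).2, Equiv.swap_apply_left, Equiv.swap_apply_right,
        Equiv.swap_apply_of_ne_of_ne h1 hpi, Equiv.swap_apply_of_ne_of_ne hpj h2]
      rw [hs (p i) i, hs (p i) j, hs (p j) j, hs (p j) i]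
      ring
    · simpa using h3
    · simp [Ne.symm hpi, Ne.symm h2]
    · simp [hij, Ne.symm h1, Ne.symm hpj]
  · intro x _ hx
    simp only [mem_insert, mem_singleton, not_or] at hx
    obtain ⟨a1, a2, a3, a4⟩ := hx
    rw [Equiv.swap_apply_of_ne_of_ne a1 a2, Equiv.swap_apply_of_ne_of_ne]
    · ring
    · intro h; apply a3; rw [← h, (hp x).2]
    · intro h; apply a4; rw [← h, (hp x).2]

lemma diff_eq {n : ℕ} (d : Fin n → Fin n → ℝ)
    (i j : Fin n) (p : Equiv.Perm (Fin n)) (hp : p ∈ MM n) (hpi : p i = j) :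
    W d p - W d (cj i j p) = 0 := by
  have hp' := hp
  simp only [MM, mem_filter, mem_univ, true_and] at hp
  have : cj i j p = p := by
    apply Equiv.ext
    intro x
    rw [cj_apply]
    have hji : p j = i := by rw [← hpi]; exact (hp i).2
    by_cases h1 : x = i
    · subst h1; simp [hji, hpi]
    by_cases h2 : x = j
    · subst h2; simp [hji, hpi]
    rw [Equiv.swap_apply_of_ne_of_ne h1 h2, Equiv.swap_apply_of_ne_of_ne]
    · intro h; apply h2; rw [← hpi, ← h, (hp x).2]
    · intro h; apply h1; rw [← hji, ← h, (hp x).2]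
  rw [this]; ring

lemma diff_self {n : ℕ} (d : Fin n → Fin n → ℝ) (i : Fin n) (p : Equiv.Perm (Fin n)) :
    W d p - W d (cj i i p) = 0 := by
  have : cj i i p = p := by ext x; simp [cj_apply]
  rw [this, sub_self]

lemma diff_all {n : ℕ} (d : Fin n → Fin n → ℝ) (hs : ∀ i j, d i j = d j i)
    (h0 : ∀ i, d i i = 0)
    (i j : Fin n) (p : Equiv.Perm (Fin n)) (hp : p ∈ MM n) :
    W d p - W d (cj i j p) = 2 * ((d i (p i) - d j (p i)) - (d i (p j) - d j (p j)))
      - (if j = p i then 4 * d i (p i) else 0) := by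
  have hp' := hp
  simp only [MM, mem_filter, mem_univ, true_and] at hp'
  by_cases hij : i = j
  · subst hij
    rw [diff_self, if_neg (Ne.symm (hp' i).1)]; ring
  by_cases h : p i = j
  · rw [diff_eq d i j p hp h, if_pos h.symm]
    subst h
    rw [(hp' i).2, h0, h0, hs (p i) i]; ring
  · rw [diff_generic d hs i j p hp hij h, if_neg (Ne.symm h)]; ring

lemma drift {n : ℕ} (d : Fin n → Fin n → ℝ) (hs : ∀ i j, d i j = d j i)
    (h0 : ∀ i, d i i = 0) (hr : ∀ i, ∑ j, d i j = 0) (p : Equiv.Perm (Fin n)) (hp : p ∈ MM n) :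
    ∑ i, ∑ j, (W d p - W d (cj i j p)) = 4 * ((n : ℝ) - 1) * W d p := by
  have hc : ∀ i, ∑ j, d j i = 0 := fun i => by
    rw [← hr i]; exact Finset.sum_congr rfl fun j _ => hs j i
  have hrp : ∀ i, ∑ j, d i (p j) = 0 := fun i => by
    rw [Equiv.sum_comp p (fun j => d i j)]; exact hr i
  have : ∀ i, ∑ j, (W d p - W d (cj i j p)) = 2 * n * d i (p i) + 2 * W d p - 4 * d i (p i) := by
    intro i
    rw [Finset.sum_congr rfl fun j _ => diff_all d hs h0 i j p hp]
    rw [Finset.sum_sub_distrib, Finset.sum_ite_eq' Finset.univ (p i), ← Finset.mul_sum]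
    simp only [Finset.sum_sub_distrib, hc, hrp]
    simp [W]; ring
  rw [Finset.sum_congr rfl fun i _ => this i]
  simp only [Finset.sum_sub_distrib, Finset.sum_add_distrib, ← Finset.mul_sum]
  simp [W]; ring

lemma diff_bound {n : ℕ} (d : Fin n → Fin n → ℝ) (hs : ∀ i j, d i j = d j i) (A : ℝ)
    (hA : ∀ i j, |d i j| ≤ A)
    (i j : Fin n) (p : Equiv.Perm (Fin n)) (hp : p ∈ MM n) :
    |W d p - W d (cj i j p)| ≤ 8 * A := by
  have hA0 : 0 ≤ A := (abs_nonneg _).trans (hA i j)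
  by_cases hij : i = j
  · subst hij
    rw [diff_self]; simp; linarith
  by_cases h : p i = j
  · rw [diff_eq d i j p hp h]; simp; linarith
  · rw [diff_generic d hs i j p hp hij h]
    have a1 := abs_le.1 (hA i (p i))
    have a2 := abs_le.1 (hA j (p i))
    have a3 := abs_le.1 (hA i (p j))
    have a4 := abs_le.1 (hA j (p j))
    rw [abs_le]; constructor <;> linarith

lemma sum_transfer {n : ℕ} (d : Fin n → Fin n → ℝ) (hs : ∀ i j, d i j = d j i) (A : ℝ)
    (hA : ∀ i j, |d i j| ≤ A) (θ : ℝ) (hθ : 0 ≤ θ) (i j : Fin n)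
    (S T : Finset (Equiv.Perm (Fin n))) (hS : S ⊆ MM n) (hST : ∀ p ∈ S, cj i j p ∈ T) :
    ∑ p ∈ S, Real.exp (θ * W d p) ≤ Real.exp (8 * A * θ) * ∑ p ∈ T, Real.exp (θ * W d p) := by
  calc ∑ p ∈ S, Real.exp (θ * W d p)
      ≤ ∑ p ∈ S, Real.exp (8 * A * θ) * Real.exp (θ * W d (cj i j p)) := by
        apply Finset.sum_le_sum
        intro p hp
        rw [← Real.exp_add]
        apply Real.exp_le_exp.2
        have := (abs_le.1 (diff_bound d hs A hA i j p (hS hp))).2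
        nlinarith
    _ = Real.exp (8 * A * θ) * ∑ p ∈ S.image (cj i j), Real.exp (θ * W d p) := by
        rw [← Finset.mul_sum, Finset.sum_image]
        intro p _ q _ h
        have := congrArg (cj i j) h
        simpa [cj_cj] using this
    _ ≤ _ := by
        apply mul_le_mul_of_nonneg_left _ (Real.exp_pos _).le
        apply Finset.sum_le_sum_of_subset_of_nonneg
        · intro q hq
          obtain ⟨p, hp, rfl⟩ := Finset.mem_image.1 hq
          exact hST p hp
        · intros; exact (Real.exp_pos _).le

lemma step1 {n : ℕ} (d : Fin n → Fin n → ℝ) (hs : ∀ i j, d i j = d j i) (A : ℝ)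
    (hA : ∀ i j, |d i j| ≤ A) (θ : ℝ) (hθ : 0 ≤ θ) (i k : Fin n) (hik : k ≠ i) :
    ((n : ℝ) - 1) * ∑ p ∈ (MM n).filter (fun p => p i = k), Real.exp (θ * W d p)
      ≤ Real.exp (8 * A * θ) * ∑ p ∈ MM n, Real.exp (θ * W d p) := by
  have h1 : ∑ p ∈ MM n, Real.exp (θ * W d p) =
      ∑ k' ∈ univ.erase i, ∑ p ∈ (MM n).filter (fun p => p i = k'), Real.exp (θ * W d p) := by
    symm
    apply Finset.sum_fiberwise_of_maps_to
    intro p hp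
    simp only [MM, mem_filter, mem_univ, true_and] at hp
    simp [(hp i).1]
  have hcard : ((univ.erase i : Finset (Fin n)).card : ℝ) = (n : ℝ) - 1 := by
    rw [Finset.cast_card_erase_of_mem (mem_univ i)]; simp
  rw [h1, Finset.mul_sum (univ.erase i), ← hcard, ← nsmul_eq_mul]
  apply Finset.card_nsmul_le_sum
  intro k' hk'
  simp only [mem_erase, mem_univ, and_true] at hk'
  apply sum_transfer d hs A hA θ hθ k k' _ _ (Finset.filter_subset _ _)
  intro p hp
  rw [mem_filter] at hp ⊢
  refine ⟨cj_mem _ _ _ hp.1, ?_⟩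
  rw [cj_apply, Equiv.swap_apply_of_ne_of_ne (Ne.symm hik) (Ne.symm hk'), hp.2]
  simp

lemma step2 {n : ℕ} (d : Fin n → Fin n → ℝ) (hs : ∀ i j, d i j = d j i) (A : ℝ)
    (hA : ∀ i j, |d i j| ≤ A) (θ : ℝ) (hθ : 0 ≤ θ) (i j k l : Fin n) (hij : i ≠ j)
    (hik : k ≠ i) (hjk : k ≠ j) (hli : l ≠ i) (hlj : l ≠ j) (hlk : l ≠ k) :
    ((n : ℝ) - 3) * ∑ p ∈ (MM n).filter (fun p => p i = k ∧ p j = l), Real.exp (θ * W d p)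
      ≤ Real.exp (8 * A * θ) * ∑ p ∈ (MM n).filter (fun p => p i = k), Real.exp (θ * W d p) := by
  have h1 : ∑ p ∈ (MM n).filter (fun p => p i = k), Real.exp (θ * W d p) =
      ∑ l' ∈ univ \ {i, j, k}, ∑ p ∈ ((MM n).filter (fun p => p i = k)).filter (fun p => p j = l'),
        Real.exp (θ * W d p) := by
    symm
    apply Finset.sum_fiberwise_of_maps_to
    intro p hp
    simp only [MM, mem_filter, mem_univ, true_and] at hp
    obtain ⟨hp, hk⟩ := hp
    simp only [mem_sdiff, mem_univ, true_and, mem_insert, mem_singleton, not_or]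
    refine ⟨?_, (hp j).1, ?_⟩
    · intro h; apply hjk; rw [← hk, ← h, (hp j).2]
    · intro h; apply hij; apply p.injective; rw [hk, h]
  have hcard : ((univ \ {i, j, k} : Finset (Fin n)).card : ℝ) = (n : ℝ) - 3 := by
    rw [Finset.cast_card_sdiff (Finset.subset_univ _)]
    rw [Finset.card_eq_three.2 ⟨i, j, k, hij, Ne.symm hik, Ne.symm hjk, rfl⟩]; simp
  rw [h1, Finset.mul_sum (univ \ {i, j, k}), ← hcard, ← nsmul_eq_mul]
  apply Finset.card_nsmul_le_sum
  intro l' hl'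
  simp only [mem_sdiff, mem_univ, true_and, mem_insert, mem_singleton, not_or] at hl'
  obtain ⟨b1, b2, b3⟩ := hl'
  apply sum_transfer d hs A hA θ hθ l l' _ _ (Finset.filter_subset _ _)
  intro p hp
  rw [mem_filter] at hp
  rw [mem_filter, mem_filter]
  refine ⟨⟨cj_mem _ _ _ hp.1, ?_⟩, ?_⟩
  · rw [cj_apply, Equiv.swap_apply_of_ne_of_ne (Ne.symm hli) (Ne.symm b1), hp.2.1,
      Equiv.swap_apply_of_ne_of_ne (Ne.symm hlk) (Ne.symm b3)]
  · rw [cj_apply, Equiv.swap_apply_of_ne_of_ne (Ne.symm hlj) (Ne.symm b2), hp.2.2]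
    simp

lemma step12 {n : ℕ} (hn : 5 ≤ n) (d : Fin n → Fin n → ℝ) (hs : ∀ i j, d i j = d j i) (A : ℝ)
    (hA : ∀ i j, |d i j| ≤ A) (θ : ℝ) (hθ : 0 ≤ θ) (i j k l : Fin n) (hij : i ≠ j)
    (hik : k ≠ i) (hjk : k ≠ j) (hli : l ≠ i) (hlj : l ≠ j) (hlk : l ≠ k) :
    ((n : ℝ) - 1) * ((n : ℝ) - 3) *
        ∑ p ∈ (MM n).filter (fun p => p i = k ∧ p j = l), Real.exp (θ * W d p)
      ≤ Real.exp (16 * A * θ) * ∑ p ∈ MM n, Real.exp (θ * W d p) := by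
  have hn' : (5 : ℝ) ≤ n := by exact_mod_cast hn
  have e1 := step1 d hs A hA θ hθ i k hik
  have e2 := step2 d hs A hA θ hθ i j k l hij hik hjk hli hlj hlk
  have e3 := mul_le_mul_of_nonneg_left e2 (by linarith : (0 : ℝ) ≤ (n : ℝ) - 1)
  have e4 := mul_le_mul_of_nonneg_left e1 (Real.exp_pos (8 * A * θ)).le
  have e5 : Real.exp (16 * A * θ) = Real.exp (8 * A * θ) * Real.exp (8 * A * θ) := by
    rw [← Real.exp_add]; congr 1; ring
  rw [e5]
  calc _ = _ := by rw [mul_assoc]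
    _ ≤ _ := e3
    _ = _ := by ring
    _ ≤ _ := e4
    _ = _ := by ring

lemma exp_diff (x y B : ℝ) (hxy : |x - y| ≤ B) :
    (x - y) * (Real.exp x - Real.exp y) ≤ (x - y) ^ 2 * (Real.exp B * Real.exp x) := by
  have key : ∀ u v : ℝ, Real.exp u - Real.exp v ≤ (u - v) * Real.exp u := by
    intro u v
    have h := Real.add_one_le_exp (v - u)
    have : Real.exp v = Real.exp u * Real.exp (v - u) := by rw [← Real.exp_add]; congr 1; ring
    rw [this]
    nlinarith [Real.exp_pos u]
  have hB : 0 ≤ B := (abs_nonneg _).trans hxy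
  rcases le_total y x with h | h
  · have h1 := mul_le_mul_of_nonneg_left (key x y) (sub_nonneg.2 h)
    have h2 : Real.exp x ≤ Real.exp B * Real.exp x := by
      have := Real.one_le_exp hB
      nlinarith [Real.exp_pos x]
    have h3 := mul_le_mul_of_nonneg_left h2 (sq_nonneg (x - y))
    nlinarith
  · have h1 := mul_le_mul_of_nonneg_left (key y x) (sub_nonneg.2 h)
    have h2 : Real.exp y ≤ Real.exp B * Real.exp x := by
      rw [← Real.exp_add]; apply Real.exp_le_exp.2
      have := (abs_le.1 hxy).1
      linarith
    have h3 := mul_le_mul_of_nonneg_left h2 (sq_nonneg (x - y))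
    nlinarith

def Q {n : ℕ} (d : Fin n → Fin n → ℝ) (i j : Fin n) : ℝ :=
  if i = j then 0 else ∑ kl ∈ (univ \ {i, j}) ×ˢ (univ \ {i, j}),
    ((d i kl.1 - d j kl.1) - (d i kl.2 - d j kl.2)) ^ 2

lemma sq_sum {ι : Type*} (T : Finset ι) (g : ι → ℝ) (h : ∑ k ∈ T, g k = 0) :
    ∑ kl ∈ T ×ˢ T, (g kl.1 - g kl.2) ^ 2 = 2 * (T.card : ℝ) * ∑ k ∈ T, g k ^ 2 := by
  rw [Finset.sum_product]
  have : ∀ k ∈ T, ∑ l ∈ T, (g k - g l) ^ 2 = T.card * g k ^ 2 + ∑ l ∈ T, g l ^ 2 := by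
    intro k _
    have : ∀ l, (g k - g l) ^ 2 = g k ^ 2 - 2 * g k * g l + g l ^ 2 := fun l => by ring
    simp only [this, Finset.sum_add_distrib, Finset.sum_sub_distrib, ← Finset.mul_sum, h]
    simp
  rw [Finset.sum_congr rfl this, Finset.sum_add_distrib, ← Finset.mul_sum]
  simp; ring

lemma Q_eq {n : ℕ} (d : Fin n → Fin n → ℝ) (hs : ∀ i j, d i j = d j i)
    (h0 : ∀ i, d i i = 0) (hr : ∀ i, ∑ j, d i j = 0) (i j : Fin n) :
    Q d i j = 2 * ((n : ℝ) - 2) * (∑ k, (d i k - d j k) ^ 2 - 2 * d i j ^ 2) := by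
  unfold Q
  split_ifs with hij
  · subst hij; simp [h0]
  have hsum : ∀ f : Fin n → ℝ, ∑ k ∈ univ \ {i, j}, f k = ∑ k, f k - (f i + f j) := by
    intro f
    rw [← Finset.sum_sdiff (Finset.subset_univ ({i, j} : Finset (Fin n))), Finset.sum_pair hij]
    ring
  have hcard : ((univ \ {i, j} : Finset (Fin n)).card : ℝ) = (n : ℝ) - 2 := by
    rw [Finset.cast_card_sdiff (Finset.subset_univ _), Finset.card_pair hij]; simp
  rw [sq_sum (univ \ {i, j}) (fun k => d i k - d j k), hcard, hsum]
  · rw [h0, h0, hs j i]; ring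
  · rw [hsum, h0, h0, hs j i, Finset.sum_sub_distrib, hr, hr]; ring

lemma Q_sum {n : ℕ} (d : Fin n → Fin n → ℝ) (hs : ∀ i j, d i j = d j i)
    (h0 : ∀ i, d i i = 0) (hr : ∀ i, ∑ j, d i j = 0) :
    ∑ i, ∑ j, Q d i j = 4 * ((n : ℝ) - 1) * ((n : ℝ) - 2) * ∑ i, ∑ j, d i j ^ 2 := by
  have hc : ∀ i, ∑ j, d j i = 0 := fun i => by
    rw [← hr i]; exact Finset.sum_congr rfl fun j _ => hs j i
  simp only [Q_eq d hs h0 hr, ← Finset.mul_sum, Finset.sum_sub_distrib]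
  have h1 : ∀ i, ∑ j, ∑ k, (d i k - d j k) ^ 2
      = n * ∑ k, d i k ^ 2 + ∑ j, ∑ k, d j k ^ 2 := by
    intro i
    have : ∀ j k, (d i k - d j k) ^ 2 = d i k ^ 2 - 2 * d i k * d j k + d j k ^ 2 :=
      fun j k => by ring
    simp only [this, Finset.sum_add_distrib, Finset.sum_sub_distrib]
    rw [Finset.sum_comm (f := fun j k => 2 * d i k * d j k)]
    simp only [← Finset.mul_sum, hc]
    simp
  simp only [h1, Finset.sum_add_distrib, ← Finset.mul_sum]
  simp; ring

lemma B1 {n : ℕ} (hn : 5 ≤ n) (d : Fin n → Fin n → ℝ) (hs : ∀ i j, d i j = d j i) (A : ℝ)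
    (hA : ∀ i j, |d i j| ≤ A) (θ : ℝ) (hθ : 0 ≤ θ) (i j : Fin n) :
    ((n : ℝ) - 1) * ((n : ℝ) - 3) *
        ∑ p ∈ MM n, (W d p - W d (cj i j p)) ^ 2 * Real.exp (θ * W d p)
      ≤ 4 * Q d i j * (Real.exp (16 * A * θ) * ∑ p ∈ MM n, Real.exp (θ * W d p)) := by
  have hn' : (5 : ℝ) ≤ n := by exact_mod_cast hn
  by_cases hij : i = j
  · subst hij
    simp [diff_self, Q]
  rw [Q, if_neg hij]
  have h1 : ∑ p ∈ MM n, (W d p - W d (cj i j p)) ^ 2 * Real.exp (θ * W d p)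
      = ∑ p ∈ (MM n).filter (fun p => p i ≠ j),
          4 * ((d i (p i) - d j (p i)) - (d i (p j) - d j (p j))) ^ 2 * Real.exp (θ * W d p) := by
    rw [Finset.sum_filter]
    apply Finset.sum_congr rfl
    intro p hp
    split_ifs with h
    · rw [diff_generic d hs i j p hp hij h]; ring
    · rw [diff_eq d i j p hp (not_not.1 h)]; ring
  have h2 : ∑ p ∈ MM n, (W d p - W d (cj i j p)) ^ 2 * Real.exp (θ * W d p)
      = ∑ kl ∈ (univ \ {i, j}) ×ˢ (univ \ {i, j}),
        ∑ p ∈ ((MM n).filter (fun p => p i ≠ j)).filter (fun p => (p i, p j) = kl),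
          4 * ((d i (p i) - d j (p i)) - (d i (p j) - d j (p j))) ^ 2 * Real.exp (θ * W d p) := by
    rw [h1]
    symm
    apply Finset.sum_fiberwise_of_maps_to
    intro p hp
    simp only [MM, mem_filter, mem_univ, true_and] at hp
    obtain ⟨hp, hk⟩ := hp
    simp only [mem_product, mem_sdiff, mem_univ, true_and, mem_insert, mem_singleton, not_or]
    refine ⟨⟨(hp i).1, hk⟩, ?_, (hp j).1⟩
    intro h; apply hk; rw [← h, (hp j).2]
  rw [h2, Finset.mul_sum, Finset.mul_sum, Finset.sum_mul]
  apply Finset.sum_le_sum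
  rintro ⟨k, l⟩ hkl
  simp only [mem_product, mem_sdiff, mem_univ, true_and, mem_insert, mem_singleton, not_or] at hkl
  obtain ⟨⟨k1, k2⟩, l1, l2⟩ := hkl
  have h3 : ∑ p ∈ ((MM n).filter (fun p => p i ≠ j)).filter (fun p => (p i, p j) = (k, l)),
          4 * ((d i (p i) - d j (p i)) - (d i (p j) - d j (p j))) ^ 2 * Real.exp (θ * W d p)
      ≤ 4 * ((d i k - d j k) - (d i l - d j l)) ^ 2 *
        ∑ p ∈ (MM n).filter (fun p => p i = k ∧ p j = l), Real.exp (θ * W d p) := by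
    rw [Finset.mul_sum]
    have : ((MM n).filter (fun p => p i ≠ j)).filter (fun p => (p i, p j) = (k, l))
        = (MM n).filter (fun p => p i = k ∧ p j = l) := by
      ext p
      simp only [mem_filter, Prod.mk.injEq]
      constructor
      · rintro ⟨⟨a, b⟩, c⟩; exact ⟨a, c⟩
      · rintro ⟨a, b, c⟩; exact ⟨⟨a, by rw [b]; exact k2⟩, b, c⟩
    rw [this]
    apply le_of_eq
    apply Finset.sum_congr rfl
    intro p hp
    obtain ⟨_, h5, h6⟩ := mem_filter.1 hp
    rw [h5, h6]
  have hc : 0 ≤ ((n : ℝ) - 1) * ((n : ℝ) - 3) := mul_nonneg (by linarith) (by linarith)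
  refine (mul_le_mul_of_nonneg_left h3 hc).trans ?_
  by_cases hlk : l = k
  · subst hlk; simp
  have e := step12 hn d hs A hA θ hθ i j k l hij k1 k2 l1 l2 hlk
  have := mul_le_mul_of_nonneg_left e
    (by positivity : 0 ≤ 4 * ((d i k - d j k) - (d i l - d j l)) ^ 2)
  calc _ = _ := by ring
    _ ≤ _ := this

lemma B2 {n : ℕ} (d : Fin n → Fin n → ℝ) (hs : ∀ i j, d i j = d j i) (A : ℝ)
    (hA : ∀ i j, |d i j| ≤ A) (θ : ℝ) (hθ : 0 < θ) (i j : Fin n) :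
    2 * ∑ p ∈ MM n, (W d p - W d (cj i j p)) * Real.exp (θ * W d p)
      ≤ θ * Real.exp (8 * A * θ) *
        ∑ p ∈ MM n, (W d p - W d (cj i j p)) ^ 2 * Real.exp (θ * W d p) := by
  have h1 : ∑ p ∈ MM n, (W d p - W d (cj i j p)) * Real.exp (θ * W d p)
      = ∑ p ∈ MM n, (W d (cj i j p) - W d p) * Real.exp (θ * W d (cj i j p)) := by
    rw [← sum_cj i j (fun p => (W d p - W d (cj i j p)) * Real.exp (θ * W d p))]
    simp only [cj_cj]
  rw [two_mul]
  nth_rewrite 2 [h1]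
  rw [← Finset.sum_add_distrib, Finset.mul_sum]
  apply Finset.sum_le_sum
  intro p hp
  have hb := diff_bound d hs A hA i j p hp
  have := exp_diff (θ * W d p) (θ * W d (cj i j p)) (8 * A * θ) (by
    rw [← mul_sub, abs_mul, abs_of_pos hθ]; nlinarith)
  refine le_of_mul_le_mul_left ?_ hθ
  calc _ = _ := by ring
    _ ≤ _ := this
    _ = _ := by ring

lemma deriv_bound {n : ℕ} (hn : 5 ≤ n) (d : Fin n → Fin n → ℝ) (hs : ∀ i j, d i j = d j i)
    (h0 : ∀ i, d i i = 0) (hr : ∀ i, ∑ j, d i j = 0) (A : ℝ)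
    (hA : ∀ i j, |d i j| ≤ A) (θ : ℝ) (hθ : 0 < θ) :
    ∑ p ∈ MM n, W d p * Real.exp (θ * W d p) ≤
      (2 * ((n : ℝ) - 2) / (((n : ℝ) - 1) * ((n : ℝ) - 3)) * ∑ i, ∑ j, d i j ^ 2) *
        (θ * Real.exp (24 * A * θ)) * ∑ p ∈ MM n, Real.exp (θ * W d p) := by
  have hn' : (5 : ℝ) ≤ n := by exact_mod_cast hn
  set Z := ∑ p ∈ MM n, Real.exp (θ * W d p) with hZ
  have hc1 : 0 < (n : ℝ) - 1 := by linarith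
  have hc3 : 0 < (n : ℝ) - 3 := by linarith
  have e1 : 4 * ((n : ℝ) - 1) * ∑ p ∈ MM n, W d p * Real.exp (θ * W d p)
      = ∑ i, ∑ j, ∑ p ∈ MM n, (W d p - W d (cj i j p)) * Real.exp (θ * W d p) := by
    rw [Finset.mul_sum]
    have : ∀ p ∈ MM n, 4 * ((n : ℝ) - 1) * (W d p * Real.exp (θ * W d p))
        = ∑ i, ∑ j, (W d p - W d (cj i j p)) * Real.exp (θ * W d p) := by
      intro p hp
      rw [← mul_assoc, ← drift d hs h0 hr p hp, Finset.sum_mul]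
      simp only [Finset.sum_mul]
    rw [Finset.sum_congr rfl this, Finset.sum_comm]
    apply Finset.sum_congr rfl
    intro i _
    rw [Finset.sum_comm]
  have e2 : ∀ i j, 2 * (((n : ℝ) - 1) * ((n : ℝ) - 3)) *
      ∑ p ∈ MM n, (W d p - W d (cj i j p)) * Real.exp (θ * W d p)
      ≤ 4 * (θ * Real.exp (24 * A * θ) * Z) * Q d i j := by
    intro i j
    have b1 := B1 hn d hs A hA θ hθ.le i j
    have b2 := B2 d hs A hA θ hθ i j
    have b3 := mul_le_mul_of_nonneg_left b2 (mul_pos hc1 hc3).le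
    have b4 := mul_le_mul_of_nonneg_left b1 (mul_pos hθ (Real.exp_pos (8 * A * θ))).le
    have e5 : Real.exp (24 * A * θ) = Real.exp (8 * A * θ) * Real.exp (16 * A * θ) := by
      rw [← Real.exp_add]; congr 1; ring
    rw [e5]
    calc _ = _ := by ring
      _ ≤ _ := b3
      _ = _ := by ring
      _ ≤ _ := b4
      _ = _ := by ring
  have e3 : 2 * (((n : ℝ) - 1) * ((n : ℝ) - 3)) *
      (4 * ((n : ℝ) - 1) * ∑ p ∈ MM n, W d p * Real.exp (θ * W d p))
      ≤ 4 * (θ * Real.exp (24 * A * θ) * Z) *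
        (4 * ((n : ℝ) - 1) * ((n : ℝ) - 2) * ∑ i, ∑ j, d i j ^ 2) := by
    rw [e1, ← Q_sum d hs h0 hr]
    simp only [Finset.mul_sum (univ : Finset (Fin n))]
    exact Finset.sum_le_sum fun i _ => Finset.sum_le_sum fun j _ => e2 i j
  have hpos : 0 < 8 * (((n : ℝ) - 1) * (((n : ℝ) - 1) * ((n : ℝ) - 3))) := by positivity
  refine le_of_mul_le_mul_left ?_ hpos
  calc _ = _ := by ring
    _ ≤ _ := e3
    _ = _ := by field_simp; ring

lemma mgf_bound {n : ℕ} (hn : 5 ≤ n) (d : Fin n → Fin n → ℝ) (hs : ∀ i j, d i j = d j i)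
    (h0 : ∀ i, d i i = 0) (hr : ∀ i, ∑ j, d i j = 0) (A : ℝ) (hA0 : 0 ≤ A)
    (hA : ∀ i j, |d i j| ≤ A) (s2 : ℝ)
    (hs2 : 2 * ((n : ℝ) - 2) / (((n : ℝ) - 1) * ((n : ℝ) - 3)) * ∑ i, ∑ j, d i j ^ 2 ≤ s2)
    (hs0 : 0 < s2) (θ : ℝ) (hθ : 0 ≤ θ) (hθ1 : 24 * A * θ < 1) :
    ∑ p ∈ MM n, Real.exp (θ * W d p) ≤
      (MM n).card * Real.exp (s2 * θ ^ 2 / (2 * (1 - 24 * A * θ))) := by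
  set K := s2 / (1 - 24 * A * θ) with hK
  let H : ℝ → ℝ := fun u => (∑ p ∈ MM n, Real.exp (u * W d p)) * Real.exp (-(K * u ^ 2 / 2))
  have hd : ∀ u, HasDerivAt H ((∑ p ∈ MM n, W d p * Real.exp (u * W d p)) *
      Real.exp (-(K * u ^ 2 / 2)) + (∑ p ∈ MM n, Real.exp (u * W d p)) *
      (Real.exp (-(K * u ^ 2 / 2)) * (-(K * u)))) u := by
    intro u
    apply HasDerivAt.mul
    · apply HasDerivAt.fun_sum
      intro p _
      have h : HasDerivAt (fun u : ℝ => u * W d p) (1 * W d p) u :=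
        (hasDerivAt_id' u).mul_const (W d p)
      exact h.exp.congr_deriv (by ring)
    · apply HasDerivAt.exp
      have h : HasDerivAt (fun u : ℝ => u ^ 2) (2 * u) u := by
        simpa using hasDerivAt_pow 2 u
      exact ((h.const_mul K).div_const 2).fun_neg.congr_deriv (by ring)
  have hanti : AntitoneOn H (Set.Icc 0 θ) := by
    apply antitoneOn_of_deriv_nonpos (convex_Icc 0 θ)
    · exact fun u _ => (hd u).continuousAt.continuousWithinAt
    · exact fun u _ => (hd u).differentiableAt.differentiableWithinAt
    · intro u hu
      rw [interior_Icc] at hu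
      rw [(hd u).deriv]
      have b := deriv_bound hn d hs h0 hr A hA u hu.1
      have hZ : 0 ≤ ∑ p ∈ MM n, Real.exp (u * W d p) :=
        Finset.sum_nonneg fun _ _ => (Real.exp_pos _).le
      have hexp : Real.exp (24 * A * u) ≤ (1 - 24 * A * θ)⁻¹ := by
        have h1 : 24 * A * u ≤ 24 * A * θ := by nlinarith [hu.2]
        have h2 := Real.add_one_le_exp (-(24 * A * u))
        rw [← inv_inv (Real.exp (24 * A * u)), ← Real.exp_neg]
        apply inv_anti₀ (by linarith)
        linarith
      have h3 : (2 * ((n : ℝ) - 2) / (((n : ℝ) - 1) * ((n : ℝ) - 3)) * ∑ i, ∑ j, d i j ^ 2) *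
        (u * Real.exp (24 * A * u)) ≤ K * u := by
        have hu0 := hu.1.le
        calc _ ≤ s2 * (u * Real.exp (24 * A * u)) := by gcongr
          _ ≤ s2 * (u * (1 - 24 * A * θ)⁻¹) := by gcongr
          _ = _ := by rw [hK]; ring
      have h4 := b.trans (mul_le_mul_of_nonneg_right h3 hZ)
      nlinarith [mul_le_mul_of_nonneg_right h4 (Real.exp_pos (-(K * u ^ 2 / 2))).le]
  have := hanti (Set.left_mem_Icc.2 hθ) (Set.right_mem_Icc.2 hθ) hθ
  simp only [H] at this
  rw [Real.exp_neg, ← div_eq_mul_inv, div_le_iff₀ (Real.exp_pos _)] at this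
  refine this.trans (le_of_eq ?_)
  simp
  left
  rw [hK, div_mul_eq_mul_div, div_div, mul_comm (2 : ℝ)]

lemma core {n : ℕ} (hn : 5 ≤ n) (d : Fin n → Fin n → ℝ) (hs : ∀ i j, d i j = d j i)
    (h0 : ∀ i, d i i = 0) (hr : ∀ i, ∑ j, d i j = 0) (A : ℝ) (hA0 : 0 ≤ A)
    (hA : ∀ i j, |d i j| ≤ A) (s2 : ℝ)
    (hs2 : 2 * ((n : ℝ) - 2) / (((n : ℝ) - 1) * ((n : ℝ) - 3)) * ∑ i, ∑ j, d i j ^ 2 ≤ s2)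
    (hs0 : 0 < s2) (t : ℝ) (ht : 0 ≤ t) :
    (((MM n).filter (fun p => t ≤ W d p)).card : ℝ) ≤
      (MM n).card * Real.exp (-(t ^ 2) / (2 * (s2 + 24 * A * t))) := by
  have hden : 0 < s2 + 24 * A * t := by positivity
  set θ := t / (s2 + 24 * A * t) with hθ
  have hθ0 : 0 ≤ θ := by positivity
  have h1 : 1 - 24 * A * θ = s2 / (s2 + 24 * A * t) := by
    rw [hθ]; field_simp; ring
  have hlt : 24 * A * θ < 1 := by
    have : 0 < s2 / (s2 + 24 * A * t) := by positivity
    linarith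
  have hm := mgf_bound hn d hs h0 hr A hA0 hA s2 hs2 hs0 θ hθ0 hlt
  have hmk : (((MM n).filter (fun p => t ≤ W d p)).card : ℝ) * Real.exp (θ * t) ≤
      ∑ p ∈ MM n, Real.exp (θ * W d p) := by
    rw [← nsmul_eq_mul]
    refine (Finset.card_nsmul_le_sum _ (fun p => Real.exp (θ * W d p)) _ ?_).trans
      (Finset.sum_le_sum_of_subset_of_nonneg (Finset.filter_subset _ _)
        (fun _ _ _ => (Real.exp_pos _).le))
    intro p hp
    apply Real.exp_le_exp.2
    exact mul_le_mul_of_nonneg_left (mem_filter.1 hp).2 hθ0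
  have h2 := hmk.trans hm
  rw [← le_div_iff₀ (Real.exp_pos _), mul_div_assoc, ← Real.exp_sub] at h2
  refine h2.trans (le_of_eq ?_)
  congr 2
  rw [h1, hθ]
  field_simp
  ring

lemma prob_le {n : ℕ} (P : Equiv.Perm (Fin n) → Prop) [DecidablePred P] (r : ℝ) (hr : 0 ≤ r)
    (h : (((MM n).filter P).card : ℝ) ≤ (MM n).card * r) :
    ((uniformOn (fpfInvolutions n)) {p | P p}).toReal ≤ r := by
  have e1 : fpfInvolutions n = ((MM n : Finset (Equiv.Perm (Fin n))) : Set (Equiv.Perm (Fin n))) := by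
    ext p; simp [fpfInvolutions, MM]
  have e2 : {p | P p} = ((univ.filter P : Finset (Equiv.Perm (Fin n))) : Set (Equiv.Perm (Fin n))) := by
    ext p; simp
  rw [e1, e2, uniformOn_apply_finset, ENNReal.toReal_div, ENNReal.toReal_natCast,
    ENNReal.toReal_natCast]
  have e3 : MM n ∩ univ.filter P = (MM n).filter P := by
    ext p; simp
  rw [e3]
  apply div_le_of_le_mul₀ (by positivity) hr
  linarith

end HoefInv

theorem hoeffding_involution_concentration (n : ℕ) (hn : 5 ≤ n) (hneven : Even n)
    (a : Fin n → Fin n → ℝ) (hsym : ∀ i j, i ≠ j → a i j = a j i)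
    (hσ : 0 < sigmaIota2 n a)
    (ao : ℝ)
    (hao : IsGreatest {x : ℝ | ∃ i j, i ≠ j ∧ x = |a i j - 2 * aio n a i + aoo n a|} ao) :
    ∀ t : ℝ, 0 ≤ t →
      ((uniformOn (fpfInvolutions n))
            {p | t ≤ (∑ i, a i (p i)) - ((n : ℝ) - 2) * aoo n a}).toReal ≤
          Real.exp (-(t ^ 2) / (2 * (sigmaIota2 n a + 24 * ao * t))) ∧
        ((uniformOn (fpfInvolutions n))
            {p | (∑ i, a i (p i)) - ((n : ℝ) - 2) * aoo n a ≤ -t}).toReal ≤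
          Real.exp (-(t ^ 2) / (2 * (sigmaIota2 n a + 24 * ao * t))) := by
  classical
  have hn' : (5 : ℝ) ≤ n := by exact_mod_cast hn
  have hn1 : (n : ℝ) - 1 ≠ 0 := by linarith
  have hn2 : (n : ℝ) - 2 ≠ 0 := by linarith
  set S : ℝ := ∑ i, ∑ j ∈ Finset.univ.filter (· ≠ i), a i j with hS
  have hfil : ∀ (f : Fin n → ℝ) (i : Fin n),
      ∑ j ∈ Finset.univ.filter (· ≠ i), f j = ∑ j, f j - f i := by
    intro f i
    rw [Finset.filter_ne', Finset.sum_erase_eq_sub (Finset.mem_univ i)]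
  have hrow : ∀ i, ∑ j ∈ Finset.univ.filter (· ≠ i), a i j = ((n : ℝ) - 2) * aio n a i := by
    intro i; rw [aio]; field_simp
  have hSo : S = ((n : ℝ) - 1) * ((n : ℝ) - 2) * aoo n a := by
    rw [aoo, ← hS]; field_simp
  have hSi : ∑ i, aio n a i = ((n : ℝ) - 1) * aoo n a := by
    have : S = ((n : ℝ) - 2) * ∑ i, aio n a i := by
      rw [hS, Finset.mul_sum]; exact Finset.sum_congr rfl fun i _ => hrow i
    apply mul_left_cancel₀ hn2
    rw [← this, hSo]; ring
  let b : Fin n → Fin n → ℝ := fun i j => a i j - 2 * aio n a i + aoo n a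
  let d : Fin n → Fin n → ℝ := fun i j =>
    if i = j then 0 else a i j - aio n a i - aio n a j + aoo n a
  have hdb : ∀ i j, i ≠ j → d i j = (b i j + b j i) / 2 := by
    intro i j hij
    simp only [d, b, if_neg hij, hsym j i hij.symm]; ring
  have h0 : ∀ i, d i i = 0 := fun i => by simp [d]
  have hs : ∀ i j, d i j = d j i := by
    intro i j
    by_cases h : i = j
    · rw [h]
    · rw [hdb i j h, hdb j i (Ne.symm h)]; ring
  have hr : ∀ i, ∑ j, d i j = 0 := by
    intro i
    have e : ∑ j, d i j = ∑ j ∈ Finset.univ.filter (· ≠ i), d i j := by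
      rw [hfil, h0]; ring
    have e2 : ∑ j ∈ Finset.univ.filter (· ≠ i), d i j =
        ∑ j ∈ Finset.univ.filter (· ≠ i), (a i j - (aio n a i - aoo n a) - aio n a j) := by
      apply Finset.sum_congr rfl
      intro j hj
      have hj := (Finset.mem_filter.1 hj).2
      simp only [d, if_neg (Ne.symm hj)]; ring
    rw [e, e2, Finset.sum_sub_distrib, Finset.sum_sub_distrib, hrow,
      hfil (fun j => aio n a j), hfil (fun _ => aio n a i - aoo n a), hSi]
    simp; ring
  have hAb : ∀ i j, i ≠ j → |b i j| ≤ ao := fun i j hij => hao.2 ⟨i, j, hij, rfl⟩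
  have hA0 : 0 ≤ ao := by
    obtain ⟨i, j, _, h⟩ := hao.1
    rw [h]; exact abs_nonneg _
  have hA : ∀ i j, |d i j| ≤ ao := by
    intro i j
    by_cases h : i = j
    · rw [h, h0]; simpa using hA0
    · rw [hdb i j h]
      have h1 := abs_le.1 (hAb i j h)
      have h2 := abs_le.1 (hAb j i (Ne.symm h))
      rw [abs_le]; constructor <;> linarith
  have hs2 : 2 * ((n : ℝ) - 2) / (((n : ℝ) - 1) * ((n : ℝ) - 3)) * ∑ i, ∑ j, d i j ^ 2
      ≤ sigmaIota2 n a := by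
    rw [sigmaIota2]
    apply mul_le_mul_of_nonneg_left
    · let c : Fin n → Fin n → ℝ := fun i j => if i = j then 0 else b i j ^ 2
      have e1 : ∑ i, ∑ j ∈ Finset.univ.filter (· ≠ i), (a i j - 2 * aio n a i + aoo n a) ^ 2
          = ∑ i, ∑ j, c i j := by
        apply Finset.sum_congr rfl
        intro i _
        rw [Finset.sum_filter]
        apply Finset.sum_congr rfl
        intro j _
        by_cases h : i = j
        · subst h; simp [c]
        · simp [c, b, h, Ne.symm h]
      have e2 : ∑ i, ∑ j, c i j = ∑ i, ∑ j, (c i j + c j i) / 2 := by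
        have : ∑ i, ∑ j, c j i = ∑ i, ∑ j, c i j := Finset.sum_comm
        simp only [← Finset.sum_div, Finset.sum_add_distrib, this]
        ring
      rw [e1, e2]
      apply Finset.sum_le_sum
      intro i _
      apply Finset.sum_le_sum
      intro j _
      by_cases h : i = j
      · subst h; simp [c, h0]
      · rw [hdb i j h]
        simp only [c, if_neg h, if_neg (Ne.symm h)]
        nlinarith [sq_nonneg (b i j - b j i)]
    · apply div_nonneg
      · linarith
      · exact mul_nonneg (by linarith) (by linarith)
  have hW : ∀ p ∈ HoefInv.MM n, (∑ i, a i (p i)) - ((n : ℝ) - 2) * aoo n a = HoefInv.W d p := by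
    intro p hp
    simp only [HoefInv.MM, Finset.mem_filter, Finset.mem_univ, true_and] at hp
    have : HoefInv.W d p = ∑ i, (a i (p i) - aio n a i - aio n a (p i) + aoo n a) := by
      apply Finset.sum_congr rfl
      intro i _
      simp only [d, if_neg (Ne.symm (hp i).1)]
    rw [this, Finset.sum_add_distrib, Finset.sum_sub_distrib, Finset.sum_sub_distrib,
      Equiv.sum_comp p (fun i => aio n a i), hSi]
    simp; ring
  intro t ht
  constructor
  · apply HoefInv.prob_le _ _ (Real.exp_pos _).le
    have := HoefInv.core hn d hs h0 hr ao hA0 hA _ hs2 hσ t ht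
    rw [Finset.filter_congr (fun p hp => by rw [hW p hp])]
    exact this
  · apply HoefInv.prob_le _ _ (Real.exp_pos _).le
    have := HoefInv.core hn (fun i j => - d i j) (fun i j => by rw [hs]) (fun i => by simp [h0])
      (fun i => by simp [hr]) ao hA0 (fun i j => by rw [abs_neg]; exact hA i j) _
      (by simpa using hs2) hσ t ht
    have hneg : ∀ p, HoefInv.W (fun i j => - d i j) p = - HoefInv.W d p := by
      intro p; simp [HoefInv.W]
    simp only [hneg] at this
    rw [Finset.filter_congr (fun p hp => by rw [hW p hp, le_neg])]
    exact this
end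

section
/- Let n ≥ 5 and let (a_{ij})_{1≤i,j≤n} be a real array satisfying a_{ij} = a_{ji} for all i ≠ j, with σ_f² > 0. Let π be a random permutation of {1,…,n} whose distribution is constant on cycle type (i.e., P(π = τ) = P(π = τ′) whenever τ and τ′ have the same cycle type) and which almost surely has no fixed points and no two-cycles, and let Y = Σ_{i=1}^n a_{iπ(i)}. Then for all t ≥ 0, both P(Y − μ ≥ t) and P(Y − μ ≤ −t) are at most exp(−t² / (2(σ_f² + 40 a_o t))), where μ = (n−2) a_{oo}, σ_f² = (1/(n−1)) Σ_{i≠j} (a_{ij} − 2a_{io} + a_{oo})², and a_o = max_{i≠j} |a_{ij} − 2a_{io} + a_{oo}|. -/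
open MeasureTheory ProbabilityTheory Real

/-- The variance `σ_f² = (1/(n-1)) ∑_{i ≠ j} (a_{ij} - 2a_{io} + a_{oo})²`. -/
noncomputable def sigmaF2 (n : ℕ) (a : Fin n → Fin n → ℝ) : ℝ :=
  (1 / ((n : ℝ) - 1)) *
    ∑ i, ∑ j ∈ Finset.univ.filter (· ≠ i), (a i j - 2 * aio n a i + aoo n a) ^ 2


/-- The statistic in the frame of the representative `p`. -/
noncomputable def Yst {n : ℕ} (b : Fin n → Fin n → ℝ) (p g : Equiv.Perm (Fin n)) : ℝ :=
  ∑ x, b (g x) (g (p x))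

theorem eigen_pair {n : ℕ} (B : Fin n → Fin n → ℝ) (hs : ∀ i j, B i j = B j i)
    (hd : ∀ i, B i i = 0) (hr : ∀ i, ∑ j, B i j = 0) (x y : Fin n) (hxy : x ≠ y) :
    ∑ u, ∑ v, B (Equiv.swap u v x) (Equiv.swap u v y) = ((n : ℝ) - 2) ^ 2 * B x y := by
  have hc : ∀ i, ∑ j, B j i = 0 := fun i => by
    rw [← hr i]; exact Finset.sum_congr rfl fun j _ => hs j i
  have h1 : ∑ v, B (Equiv.swap x v x) (Equiv.swap x v y) = B x y := by
    have : ∀ v, B (Equiv.swap x v x) (Equiv.swap x v y) = B v y + if v = y then B x y else 0 := by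
      intro v
      by_cases hv : v = y
      · subst hv; simp [hd, hs v x]
      · simp [hv, Equiv.swap_apply_of_ne_of_ne hxy.symm (Ne.symm hv)]
    rw [Finset.sum_congr rfl fun v _ => this v]
    simp [Finset.sum_add_distrib, hc]
  have h2 : ∑ v, B (Equiv.swap y v x) (Equiv.swap y v y) = B x y := by
    have : ∀ v, B (Equiv.swap y v x) (Equiv.swap y v y) = B x v + if v = x then B x y else 0 := by
      intro v
      by_cases hv : v = x
      · subst hv; simp [hd, hs y v]
      · simp [hv, Equiv.swap_apply_of_ne_of_ne hxy (Ne.symm hv)]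
    rw [Finset.sum_congr rfl fun v _ => this v]
    simp [Finset.sum_add_distrib, hr]
  have h3 : ∀ u, u ≠ x → u ≠ y → ∑ v, B (Equiv.swap u v x) (Equiv.swap u v y)
      = B u y + B x u + ((n : ℝ) - 2) * B x y := by
    intro u hux huy
    have : ∀ v, B (Equiv.swap u v x) (Equiv.swap u v y)
        = B x y + (if v = x then B u y - B x y else 0) + if v = y then B x u - B x y else 0 := by
      intro v
      by_cases hv : v = x
      · subst hv
        simp [hxy, Equiv.swap_apply_of_ne_of_ne huy.symm hxy.symm]
      · by_cases hv' : v = y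
        · subst hv'
          simp [hxy.symm, Equiv.swap_apply_of_ne_of_ne hux.symm hxy]
        · simp [hv, hv', Equiv.swap_apply_of_ne_of_ne hux.symm (Ne.symm hv),
            Equiv.swap_apply_of_ne_of_ne huy.symm (Ne.symm hv')]
    simp only [this, Finset.sum_add_distrib, Finset.sum_ite_eq', Finset.mem_univ, if_true,
      Finset.sum_const, Finset.card_univ, Fintype.card_fin, nsmul_eq_mul]
    ring
  have h4 : ∀ u, ∑ v, B (Equiv.swap u v x) (Equiv.swap u v y)
      = B u y + B x u + ((n : ℝ) - 2) * B x y
        + (if u = x then (2 - (n : ℝ)) * B x y else 0)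
        + (if u = y then (2 - (n : ℝ)) * B x y else 0) := by
    intro u
    by_cases hu : u = x
    · subst hu; rw [h1]; simp [hxy, hd]; ring
    · by_cases hu' : u = y
      · subst hu'; rw [h2]; simp [hd, hxy.symm]; ring
      · rw [h3 u hu hu']; simp [hu, hu']
  simp only [h4, Finset.sum_add_distrib, Finset.sum_ite_eq', Finset.mem_univ, if_true,
      Finset.sum_const, Finset.card_univ, Fintype.card_fin, nsmul_eq_mul, hc, hr]
  ring

theorem eigen_Y {n : ℕ} (b : Fin n → Fin n → ℝ) (hs : ∀ i j, b i j = b j i)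
    (hd : ∀ i, b i i = 0) (hr : ∀ i, ∑ j, b i j = 0) (p g : Equiv.Perm (Fin n))
    (hp : ∀ i, p i ≠ i) :
    ∑ u, ∑ v, Yst b p (g * Equiv.swap u v) = ((n : ℝ) - 2) ^ 2 * Yst b p g := by
  unfold Yst
  have : ∀ u : Fin n, ∑ v, ∑ x, b ((g * Equiv.swap u v) x) ((g * Equiv.swap u v) (p x))
      = ∑ x, ∑ v, b (g (Equiv.swap u v x)) (g (Equiv.swap u v (p x))) := by
    intro u; rw [Finset.sum_comm]; rfl
  rw [Finset.sum_congr rfl fun u _ => this u, Finset.sum_comm, Finset.mul_sum]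
  refine Finset.sum_congr rfl fun x _ => ?_
  refine eigen_pair (fun i j => b (g i) (g j)) (fun _ _ => hs _ _) (fun _ => hd _) ?_ x (p x)
    (hp x).symm
  intro i
  rw [← hr (g i)]
  exact Equiv.sum_comp g (fun j => b (g i) j)

theorem sum_mul_swap {n : ℕ} (f : Equiv.Perm (Fin n) → ℝ) (r : Equiv.Perm (Fin n)) :
    ∑ g, f (g * r) = ∑ g, f g := Equiv.sum_comp (Equiv.mulRight r) f

theorem two_point {n : ℕ} (b : Fin n → Fin n → ℝ) (hs : ∀ i j, b i j = b j i)
    (hd : ∀ i, b i i = 0) (x y : Fin n) (hxy : x ≠ y) :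
    ((n : ℝ) * (n - 1)) * ∑ g : Equiv.Perm (Fin n), b (g x) (g y) ^ 2
      = (Nat.factorial n : ℝ) * ∑ i, ∑ j, b i j ^ 2 := by
  set V : Fin n → Fin n → ℝ := fun x y => ∑ g : Equiv.Perm (Fin n), b (g x) (g y) ^ 2 with hV
  have hsw : ∀ x y w, y ≠ x → w ≠ x → V x y = V x w := by
    intro x y w hy hw
    rw [hV]; dsimp only
    rw [← sum_mul_swap _ (Equiv.swap y w)]
    refine Finset.sum_congr rfl fun g _ => ?_
    simp [Equiv.swap_apply_of_ne_of_ne hy.symm hw.symm]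
  have hsy : ∀ x y, V x y = V y x := by
    intro x y; rw [hV]; dsimp only
    exact Finset.sum_congr rfl fun g _ => by rw [hs]
  have hall : ∀ z w, z ≠ w → V z w = V x y := by
    intro z w hzw
    by_cases hwx : w = x
    · subst hwx
      rw [hsy z w]; exact hsw _ _ _ hzw hxy.symm
    · rw [hsw x y w hxy.symm hwx, hsy x w, hsy z w]
      exact hsw _ _ _ hzw (Ne.symm hwx)
  have h1 : ∑ z, ∑ w, V z w = (n : ℝ) * (n - 1) * V x y := by
    have : ∀ z w, V z w = V x y - if z = w then V x y else 0 := by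
      intro z w
      by_cases h : z = w
      · subst h; simp [hV, hd]
      · simp [h, hall z w h]
    rw [Finset.sum_congr rfl fun z _ => Finset.sum_congr rfl fun w _ => this z w]
    simp only [Finset.sum_sub_distrib, Finset.sum_ite_eq, Finset.mem_univ, if_true,
      Finset.sum_const, Finset.card_univ, Fintype.card_fin, nsmul_eq_mul]
    ring
  have h2 : ∑ z, ∑ w, V z w = (Nat.factorial n : ℝ) * ∑ i, ∑ j, b i j ^ 2 := by
    have e1 : ∀ z, ∑ w, V z w = ∑ g : Equiv.Perm (Fin n), ∑ j, b (g z) j ^ 2 := by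
      intro z; rw [hV]; dsimp only; rw [Finset.sum_comm]
      exact Finset.sum_congr rfl fun g _ => Equiv.sum_comp g (fun j => b (g z) j ^ 2)
    rw [Finset.sum_congr rfl fun z _ => e1 z, Finset.sum_comm]
    rw [Finset.sum_congr rfl fun (g : Equiv.Perm (Fin n)) _ =>
      Equiv.sum_comp g (fun i => ∑ j, b i j ^ 2)]
    simp [Finset.card_univ, Fintype.card_perm]
  rw [← h1, h2]

theorem three_point {n : ℕ} (b : Fin n → Fin n → ℝ) (hd : ∀ i, b i i = 0)
    (hr : ∀ i, ∑ j, b i j = 0) (x y z : Fin n) (hxy : x ≠ y) (hxz : x ≠ z) (hyz : y ≠ z) :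
    ((n : ℝ) - 2) * ∑ g : Equiv.Perm (Fin n), b (g x) (g y) * b (g x) (g z)
      = - ∑ g : Equiv.Perm (Fin n), b (g x) (g y) ^ 2 := by
  set T : Fin n → ℝ := fun w => ∑ g : Equiv.Perm (Fin n), b (g x) (g y) * b (g x) (g w) with hT
  have hsw : ∀ w, w ≠ x → w ≠ y → T w = T z := by
    intro w h1 h2
    rw [hT]; dsimp only
    rw [← sum_mul_swap _ (Equiv.swap w z)]
    refine Finset.sum_congr rfl fun g _ => ?_
    simp [Equiv.swap_apply_of_ne_of_ne h1.symm hxz, Equiv.swap_apply_of_ne_of_ne h2.symm hyz]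
  have hx : T x = 0 := by simp [hT, hd]
  have h0 : ∑ w, T w = 0 := by
    rw [hT]; dsimp only; rw [Finset.sum_comm]
    refine Finset.sum_eq_zero fun g _ => ?_
    rw [← Finset.mul_sum, Equiv.sum_comp g (fun j => b (g x) j), hr, mul_zero]
  have h1 : ∀ w, T w = T z + (if w = x then - T z else 0) + (if w = y then T y - T z else 0) := by
    intro w
    by_cases h : w = x
    · subst h; simp [hx, hxy]
    · by_cases h' : w = y
      · subst h'; simp [h]
      · simp [h, h', hsw w h h']
  rw [Finset.sum_congr rfl fun w _ => h1 w] at h0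
  simp only [Finset.sum_add_distrib, Finset.sum_ite_eq', Finset.mem_univ, if_true,
      Finset.sum_const, Finset.card_univ, Fintype.card_fin, nsmul_eq_mul] at h0
  have : T y = ∑ g : Equiv.Perm (Fin n), b (g x) (g y) ^ 2 := by
    rw [hT]; exact Finset.sum_congr rfl fun g _ => (sq _).symm
  rw [← this]
  change ((n : ℝ) - 2) * T z = _
  linarith

theorem four_point {n : ℕ} (b : Fin n → Fin n → ℝ) (hs : ∀ i j, b i j = b j i)
    (hd : ∀ i, b i i = 0)
    (hr : ∀ i, ∑ j, b i j = 0) (x y z w : Fin n) (hxy : x ≠ y) (hxz : x ≠ z) (hyz : y ≠ z)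
    (hxw : x ≠ w) (hyw : y ≠ w) (hzw : z ≠ w) :
    ((n : ℝ) - 2) * (((n : ℝ) - 3) * ∑ g : Equiv.Perm (Fin n), b (g x) (g y) * b (g z) (g w))
      = 2 * ∑ g : Equiv.Perm (Fin n), b (g x) (g y) ^ 2 := by
  set T : Fin n → ℝ := fun w => ∑ g : Equiv.Perm (Fin n), b (g x) (g y) * b (g z) (g w) with hT
  have hsw : ∀ v, v ≠ x → v ≠ y → v ≠ z → T v = T w := by
    intro v h1 h2 h3
    rw [hT]; dsimp only
    rw [← sum_mul_swap _ (Equiv.swap v w)]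
    refine Finset.sum_congr rfl fun g _ => ?_
    simp [Equiv.swap_apply_of_ne_of_ne h1.symm hxw, Equiv.swap_apply_of_ne_of_ne h2.symm hyw,
      Equiv.swap_apply_of_ne_of_ne h3.symm hzw]
  have hz : T z = 0 := by simp [hT, hd]
  have h0 : ∑ w, T w = 0 := by
    rw [hT]; dsimp only; rw [Finset.sum_comm]
    refine Finset.sum_eq_zero fun g _ => ?_
    rw [← Finset.mul_sum, Equiv.sum_comp g (fun j => b (g z) j), hr, mul_zero]
  have h1 : ∀ v, T v = T w + (if v = x then T x - T w else 0) + (if v = y then T y - T w else 0)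
      + (if v = z then - T w else 0) := by
    intro v
    by_cases h : v = x
    · subst h; simp [hxy, hxz]
    · by_cases h' : v = y
      · subst h'; simp [h, hyz]
      · by_cases h'' : v = z
        · subst h''; simp [h, h', hz]
        · simp [h, h', h'', hsw v h h' h'']
  rw [Finset.sum_congr rfl fun w _ => h1 w] at h0
  simp only [Finset.sum_add_distrib, Finset.sum_ite_eq', Finset.mem_univ, if_true,
      Finset.sum_const, Finset.card_univ, Fintype.card_fin, nsmul_eq_mul] at h0
  have hTx : ((n : ℝ) - 2) * T x = - ∑ g : Equiv.Perm (Fin n), b (g x) (g y) ^ 2 := by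
    rw [← three_point b hd hr x y z hxy hxz hyz]
    congr 1
    exact Finset.sum_congr rfl fun g _ => by rw [hs (g z)]
  have hTy : ((n : ℝ) - 2) * T y = - ∑ g : Equiv.Perm (Fin n), b (g x) (g y) ^ 2 := by
    have := three_point b hd hr y x z hxy.symm hyz hxz
    rw [Finset.sum_congr rfl fun (g : Equiv.Perm (Fin n)) _ => by rw [hs (g x) (g y)], ← this]
    congr 1
    exact Finset.sum_congr rfl fun g _ => by rw [hs (g z), hs (g x)]
  change ((n : ℝ) - 2) * (((n : ℝ) - 3) * T w) = _
  have : ((n : ℝ) - 3) * T w = - T x - T y := by linarith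
  rw [this]
  linarith

theorem var_Y {n : ℕ} (hn : 5 ≤ n) (b : Fin n → Fin n → ℝ) (hs : ∀ i j, b i j = b j i)
    (hd : ∀ i, b i i = 0) (hr : ∀ i, ∑ j, b i j = 0) (p : Equiv.Perm (Fin n))
    (hp : ∀ i, p i ≠ i ∧ p (p i) ≠ i) :
    ((n : ℝ) - 1) * ∑ g, Yst b p g ^ 2 = (Nat.factorial n : ℝ) * ∑ i, ∑ j, b i j ^ 2 := by
  have hn' : (5 : ℝ) ≤ n := by exact_mod_cast hn
  have key : ∀ x, ∑ y, ∑ g : Equiv.Perm (Fin n), b (g x) (g (p x)) * b (g y) (g (p y))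
      = ∑ g : Equiv.Perm (Fin n), b (g x) (g (p x)) ^ 2 := by
    intro x
    set V := ∑ g : Equiv.Perm (Fin n), b (g x) (g (p x)) ^ 2 with hV
    set T : Fin n → ℝ := fun y =>
      ∑ g : Equiv.Perm (Fin n), b (g x) (g (p x)) * b (g y) (g (p y)) with hT
    have hx0 : x ≠ p x := (hp x).1.symm
    set q := p.symm x with hq
    have hpq : p q = x := by simp [hq]
    have hqx : q ≠ x := by intro h; rw [h] at hpq; exact hx0 hpq.symm
    have hqpx : q ≠ p x := by intro h; rw [h] at hpq; exact (hp x).2 hpq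
    have t1 : T x = V := Finset.sum_congr rfl fun g _ => (sq _).symm
    have t2 : T (p x) = - V / ((n : ℝ) - 2) := by
      rw [eq_div_iff (by linarith)]
      have := three_point b hd hr (p x) x (p (p x)) hx0.symm (hp (p x)).1.symm (hp x).2.symm
      rw [mul_comm]
      rw [Finset.sum_congr rfl fun (g : Equiv.Perm (Fin n)) _ => by rw [hs (g (p x)) (g x)]] at this
      rw [hV, Finset.sum_congr rfl fun (g : Equiv.Perm (Fin n)) _ => by rw [hs (g x) (g (p x))]]
      exact this
    have t3 : T q = - V / ((n : ℝ) - 2) := by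
      rw [eq_div_iff (by linarith)]
      have := three_point b hd hr x (p x) q hx0 hqx.symm hqpx.symm
      rw [mul_comm, ← this]
      congr 1
      exact Finset.sum_congr rfl fun g _ => by rw [hpq, hs (g q)]
    have t4 : ∀ y, y ≠ x → y ≠ p x → y ≠ q →
        T y = 2 * V / (((n : ℝ) - 2) * ((n : ℝ) - 3)) := by
      intro y h1 h2 h3
      have h5 : (n : ℝ) - 2 ≠ 0 := by linarith
      have h6 : (n : ℝ) - 3 ≠ 0 := by linarith
      rw [eq_div_iff (mul_ne_zero h5 h6)]
      have := four_point b hs hd hr x (p x) y (p y) hx0 h1.symm h2.symm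
        (fun h => h3 (by rw [hq, h]; simp)) (fun h => h1 (p.injective h).symm) (hp y).1.symm
      rw [← this]; ring
    have h1 : ∀ y, T y = 2 * V / (((n : ℝ) - 2) * ((n : ℝ) - 3))
        + (if y = x then V - 2 * V / (((n : ℝ) - 2) * ((n : ℝ) - 3)) else 0)
        + (if y = p x then - V / ((n : ℝ) - 2) - 2 * V / (((n : ℝ) - 2) * ((n : ℝ) - 3)) else 0)
        + (if y = q then - V / ((n : ℝ) - 2) - 2 * V / (((n : ℝ) - 2) * ((n : ℝ) - 3)) else 0) := by
      intro y
      by_cases h : y = x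
      · subst h; simp [t1, hx0, hqx.symm]
      · by_cases h' : y = p x
        · rw [h', t2]; simp [hx0.symm, hqpx.symm]
        · by_cases h'' : y = q
          · rw [h'', t3]; simp [hqx, hqpx]
          · rw [t4 y h h' h'']; simp [h, h', h'']
    rw [Finset.sum_congr rfl fun y _ => h1 y]
    simp only [Finset.sum_add_distrib, Finset.sum_ite_eq', Finset.mem_univ, if_true,
      Finset.sum_const, Finset.card_univ, Fintype.card_fin, nsmul_eq_mul]
    have h5 : (n : ℝ) - 2 ≠ 0 := by linarith
    have h6 : (n : ℝ) - 3 ≠ 0 := by linarith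
    field_simp
    ring
  have e : ∑ g, Yst b p g ^ 2 = ∑ x, ∑ g : Equiv.Perm (Fin n), b (g x) (g (p x)) ^ 2 := by
    rw [← Finset.sum_congr rfl fun x _ => key x]
    have : ∀ x : Fin n, ∑ y, ∑ g : Equiv.Perm (Fin n), b (g x) (g (p x)) * b (g y) (g (p y))
        = ∑ g : Equiv.Perm (Fin n), b (g x) (g (p x)) * Yst b p g := by
      intro x; rw [Finset.sum_comm]
      refine Finset.sum_congr rfl fun g _ => ?_
      rw [Yst, Finset.mul_sum]
    rw [Finset.sum_congr rfl fun x _ => this x, Finset.sum_comm]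
    refine Finset.sum_congr rfl fun g _ => ?_
    rw [← Finset.sum_mul, sq]; rfl
  have hn0 : (n : ℝ) ≠ 0 := by linarith
  apply mul_left_cancel₀ hn0
  rw [e, ← mul_assoc, Finset.mul_sum,
    Finset.sum_congr rfl fun x _ => two_point b hs hd x (p x) (hp x).1.symm]
  simp
theorem exists_local_perm {n : ℕ} (s : Equiv.Perm (Fin n)) (X : Finset (Fin n)) :
    ∃ r : Equiv.Perm (Fin n), (∀ x ∈ X, r x = s x) ∧
      ∀ y, y ∉ X → y ∉ X.image s → r y = y := by
  induction X using Finset.induction_on with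
  | empty => exact ⟨1, by simp, by simp⟩
  | insert x X hx ih =>
    obtain ⟨r, h1, h2⟩ := ih
    refine ⟨Equiv.swap (r x) (s x) * r, ?_, ?_⟩
    · intro y hy
      rcases Finset.mem_insert.1 hy with rfl | hy
      · simp
      · have hyx : y ≠ x := fun h => hx (h ▸ hy)
        rw [Equiv.Perm.mul_apply, Equiv.swap_apply_of_ne_of_ne (fun h => hyx (r.injective h)), h1 y hy]
        rw [h1 y hy]; exact fun h => hyx (s.injective h)
    · intro y hy hy'
      simp only [Finset.mem_insert, not_or, Finset.image_insert] at hy hy'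
      have hry := h2 y hy.2 hy'.2
      rw [Equiv.Perm.mul_apply, hry, Equiv.swap_apply_of_ne_of_ne _ hy'.1]
      intro h
      exact hy.1 (r.injective (hry.trans h))

theorem Y_change {n : ℕ} (b : Fin n → Fin n → ℝ) (A : ℝ) (hA : ∀ i j, |b i j| ≤ A)
    (p g r : Equiv.Perm (Fin n)) (W : Finset (Fin n))
    (hW : ∀ x, x ∉ W → r x = x ∧ r (p x) = p x) :
    Yst b p (g * r) ≤ Yst b p g + 2 * A * W.card := by
  have h : Yst b p (g * r) - Yst b p g
      = ∑ x ∈ W, (b ((g * r) x) ((g * r) (p x)) - b (g x) (g (p x))) := by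
    unfold Yst
    rw [← Finset.sum_sub_distrib]
    symm
    apply Finset.sum_subset (Finset.subset_univ _)
    intro x _ hx
    simp [hW x hx]
  have h2 : ∑ x ∈ W, (b ((g * r) x) ((g * r) (p x)) - b (g x) (g (p x))) ≤ ∑ x ∈ W, 2 * A := by
    refine Finset.sum_le_sum fun x _ => ?_
    have := abs_le.1 (hA ((g * r) x) ((g * r) (p x)))
    have := abs_le.1 (hA (g x) (g (p x)))
    linarith
  rw [Finset.sum_const, nsmul_eq_mul] at h2
  linarith

/-- the six relevant positions -/
def Xset {n : ℕ} (p : Equiv.Perm (Fin n)) (u v : Fin n) : Finset (Fin n) :=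
  {u, v, p u, p v, p.symm u, p.symm v}

theorem Y_change_local {n : ℕ} (b : Fin n → Fin n → ℝ) (A : ℝ) (hA0 : 0 ≤ A)
    (hA : ∀ i j, |b i j| ≤ A)
    (p g r s : Equiv.Perm (Fin n)) (u v : Fin n)
    (hr : ∀ y, y ∉ Xset p u v → y ∉ (Xset p u v).image s → r y = y) :
    Yst b p (g * r) ≤ Yst b p g + 40 * A := by
  set X := Xset p u v with hX
  set E : Finset (Fin n) := {p.symm (p.symm u), p.symm u, u, p u,
    p.symm (p.symm v), p.symm v, v, p v} with hE
  have hEc : E.card ≤ 8 := by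
    rw [hE]
    refine (Finset.card_insert_le _ _).trans (Nat.succ_le_succ ?_)
    refine (Finset.card_insert_le _ _).trans (Nat.succ_le_succ ?_)
    exact Finset.card_le_six
  have hXc : X.card ≤ 6 := Finset.card_le_six
  have h1 : (X.image s).card ≤ 6 := Finset.card_image_le.trans hXc
  have h2 : ((X.image s).image p.symm).card ≤ 6 := Finset.card_image_le.trans h1
  set W := E ∪ (X.image s ∪ (X.image s).image p.symm) with hWdef
  have hc : W.card ≤ 20 := by
    have a1 := Finset.card_union_le E (X.image s ∪ (X.image s).image p.symm)
    have a2 := Finset.card_union_le (X.image s) ((X.image s).image p.symm)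
    rw [← hWdef] at a1
    omega
  have hW : ∀ x, x ∉ W → r x = x ∧ r (p x) = p x := by
    intro x hx
    rw [hWdef, Finset.mem_union, Finset.mem_union, not_or, not_or] at hx
    obtain ⟨hx1, hx2, hx3⟩ := hx
    rw [hE] at hx1
    simp only [Finset.mem_insert, Finset.mem_singleton, not_or] at hx1
    obtain ⟨e1, e2, e3, e4, e5, e6, e7, e8⟩ := hx1
    constructor
    · apply hr _ _ hx2
      rw [hX, Xset]
      simp only [Finset.mem_insert, Finset.mem_singleton, not_or]
      exact ⟨e3, e7, e4, e8, e2, e6⟩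
    · apply hr
      · rw [hX, Xset]
        simp only [Finset.mem_insert, Finset.mem_singleton, not_or]
        simp only [← Equiv.eq_symm_apply, Equiv.symm_apply_apply]
        exact ⟨e2, e6, e3, e7, e1, e5⟩
      · intro h
        exact hx3 (Finset.mem_image.2 ⟨p x, h, by simp⟩)
  have := Y_change b A hA p g r W hW
  have hc' : (W.card : ℝ) ≤ 20 := by exact_mod_cast hc
  nlinarith

theorem D_local {n : ℕ} (b : Fin n → Fin n → ℝ) (p g h : Equiv.Perm (Fin n)) (u v : Fin n)
    (hgh : ∀ x ∈ Xset p u v, g x = h x) :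
    Yst b p g - Yst b p (g * Equiv.swap u v) = Yst b p h - Yst b p (h * Equiv.swap u v) := by
  unfold Yst
  rw [← Finset.sum_sub_distrib, ← Finset.sum_sub_distrib]
  refine Finset.sum_congr rfl fun x _ => ?_
  have hsw : ∀ y ∈ Xset p u v, Equiv.swap u v y ∈ Xset p u v := by
    intro y hy
    rw [Equiv.swap_apply_def]
    split_ifs
    · simp [Xset]
    · simp [Xset]
    · exact hy
  by_cases hx : (x ≠ u ∧ x ≠ v) ∧ (p x ≠ u ∧ p x ≠ v)
  · simp [Equiv.swap_apply_of_ne_of_ne hx.1.1 hx.1.2, Equiv.swap_apply_of_ne_of_ne hx.2.1 hx.2.2]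
  · have hm : x ∈ Xset p u v ∧ p x ∈ Xset p u v := by
      have : x = u ∨ x = v ∨ p x = u ∨ p x = v := by tauto
      rcases this with rfl | rfl | h | h
      · simp [Xset]
      · simp [Xset]
      · rw [← Equiv.eq_symm_apply] at h
        subst h; simp [Xset]
      · rw [← Equiv.eq_symm_apply] at h
        subst h; simp [Xset]
    simp only [Equiv.Perm.mul_apply]
    rw [hgh _ hm.1, hgh _ hm.2, hgh _ (hsw _ hm.1), hgh _ (hsw _ hm.2)]

theorem decouple {n : ℕ} (b : Fin n → Fin n → ℝ) (A : ℝ) (hA0 : 0 ≤ A)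
    (hA : ∀ i j, |b i j| ≤ A) (p : Equiv.Perm (Fin n)) (u v : Fin n) (θ : ℝ) (hθ : 0 ≤ θ)
    (F : Equiv.Perm (Fin n) → ℝ) (hF0 : ∀ g, 0 ≤ F g)
    (hF : ∀ g h, (∀ x ∈ Xset p u v, g x = h x) → F g = F h) :
    (Nat.factorial n : ℝ) * ∑ g, F g * exp (θ * Yst b p g)
      ≤ exp (40 * A * θ) * (∑ g, F g) * ∑ g, exp (θ * Yst b p g) := by
  choose r hr1 hr2 using fun s : Equiv.Perm (Fin n) => exists_local_perm s (Xset p u v)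
  have e1 : (Nat.factorial n : ℝ) * ∑ g, F g * exp (θ * Yst b p g)
      = ∑ s : Equiv.Perm (Fin n), ∑ g, F (g * r s) * exp (θ * Yst b p (g * r s)) := by
    rw [Finset.sum_congr rfl fun s _ => sum_mul_swap (fun g => F g * exp (θ * Yst b p g)) (r s)]
    simp [Finset.card_univ, Fintype.card_perm]
  have e2 : exp (40 * A * θ) * (∑ g, F g) * ∑ g, exp (θ * Yst b p g)
      = ∑ s : Equiv.Perm (Fin n), ∑ g, F (g * s) * (exp (40 * A * θ) * exp (θ * Yst b p g)) := by
    rw [Finset.sum_comm, Finset.mul_sum]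
    refine Finset.sum_congr rfl fun g _ => ?_
    rw [← Finset.sum_mul, Equiv.sum_comp (Equiv.mulLeft g) F |>.symm]
    simp only [Equiv.coe_mulLeft]
    ring
  rw [e1, e2]
  refine Finset.sum_le_sum fun s _ => Finset.sum_le_sum fun g _ => ?_
  rw [hF (g * r s) (g * s) (fun x hx => by simp [hr1 s x hx])]
  refine mul_le_mul_of_nonneg_left ?_ (hF0 _)
  rw [← exp_add]
  apply exp_le_exp.2
  have := Y_change_local b A hA0 hA p g (r s) s u v (hr2 s)
  nlinarith

theorem exp_ineq_aux (d : ℝ) (hd : 0 ≤ d) : exp d - 1 ≤ d * ((exp d + 1) / 2) := by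
  have hder : ∀ x : ℝ, HasDerivAt (fun x : ℝ => x * ((exp x + 1) / 2) - exp x)
      (1 * ((exp x + 1) / 2) + x * (exp x / 2) - exp x) x := by
    intro x
    exact ((hasDerivAt_id x).mul (((Real.hasDerivAt_exp x).add_const 1).div_const 2)).sub
      (Real.hasDerivAt_exp x)
  have hmono : Monotone (fun x : ℝ => x * ((exp x + 1) / 2) - exp x) := by
    apply monotone_of_deriv_nonneg (fun x => (hder x).differentiableAt)
    intro x
    rw [(hder x).deriv]
    have h1 := Real.add_one_le_exp (-x)
    have h2 := mul_le_mul_of_nonneg_left h1 (exp_pos x).le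
    rw [← exp_add] at h2
    simp only [add_neg_cancel, exp_zero] at h2
    linarith
  have := hmono hd
  simp only [exp_zero] at this
  linarith

theorem exp_ineq_aux2 (x y : ℝ) (h : y ≤ x) :
    (x - y) * (exp x - exp y) ≤ (x - y) ^ 2 * ((exp x + exp y) / 2) := by
  have h1 := exp_ineq_aux (x - y) (by linarith)
  have h2 : exp x = exp y * exp (x - y) := by rw [← exp_add]; congr 1; ring
  have h3 := mul_le_mul_of_nonneg_left h1 (mul_nonneg (sub_nonneg.2 h) (exp_pos y).le)
  rw [h2]
  linarith

theorem exp_ineq (x y : ℝ) :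
    (x - y) * (exp x - exp y) ≤ (x - y) ^ 2 * ((exp x + exp y) / 2) := by
  rcases le_total y x with h | h
  · exact exp_ineq_aux2 x y h
  · have := exp_ineq_aux2 y x h
    linarith

theorem mgf_deriv_bound {n : ℕ} (hn : 5 ≤ n) (b : Fin n → Fin n → ℝ) (A : ℝ) (hA0 : 0 ≤ A)
    (hA : ∀ i j, |b i j| ≤ A) (hs : ∀ i j, b i j = b j i)
    (hd : ∀ i, b i i = 0) (hr : ∀ i, ∑ j, b i j = 0) (p : Equiv.Perm (Fin n))
    (hp : ∀ i, p i ≠ i) (θ : ℝ) (hθ : 0 < θ) :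
    (Nat.factorial n : ℝ) * ∑ g, Yst b p g * exp (θ * Yst b p g)
      ≤ θ * exp (40 * A * θ) * (∑ g, Yst b p g ^ 2) * ∑ g, exp (θ * Yst b p g) := by
  have hn' : (5 : ℝ) ≤ n := by exact_mod_cast hn
  set Y := Yst b p with hY
  -- eigenfunction identity
  have heig : ∀ f : Equiv.Perm (Fin n) → ℝ,
      ∑ u, ∑ v, ∑ g, (Y g - Y (g * Equiv.swap u v)) * f g = 4 * ((n : ℝ) - 1) * ∑ g, Y g * f g := by
    intro f
    have : ∀ u : Fin n, ∑ v, ∑ g, (Y g - Y (g * Equiv.swap u v)) * f g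
        = ∑ g, ∑ v, (Y g - Y (g * Equiv.swap u v)) * f g := fun u => Finset.sum_comm
    rw [Finset.sum_congr rfl fun u _ => this u, Finset.sum_comm, Finset.mul_sum]
    refine Finset.sum_congr rfl fun g _ => ?_
    simp only [← Finset.sum_mul, Finset.sum_sub_distrib]
    rw [eigen_Y b hs hd hr p g hp]
    simp only [Finset.sum_const, Finset.card_univ, Fintype.card_fin, nsmul_eq_mul]
    ring
  -- symmetrisation
  have hsymm : ∀ (f : Equiv.Perm (Fin n) → ℝ) (u v : Fin n),
      ∑ g, (Y g - Y (g * Equiv.swap u v)) * f g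
        = (1 / 2) * ∑ g, (Y g - Y (g * Equiv.swap u v)) * (f g - f (g * Equiv.swap u v)) := by
    intro f u v
    have h1 := sum_mul_swap (fun g => (Y g - Y (g * Equiv.swap u v)) * f g) (Equiv.swap u v)
    simp only [mul_assoc, Equiv.swap_mul_self, mul_one] at h1
    have h2 : ∑ g, (Y g - Y (g * Equiv.swap u v)) * (f g - f (g * Equiv.swap u v))
        = ∑ g, (Y g - Y (g * Equiv.swap u v)) * f g
          + ∑ g, (Y (g * Equiv.swap u v) - Y g) * f (g * Equiv.swap u v) := by
      rw [← Finset.sum_add_distrib]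
      exact Finset.sum_congr rfl fun g _ => by ring
    rw [h2, h1]; ring
  have hpair : ∀ u v : Fin n, (Nat.factorial n : ℝ) *
      ∑ g, (Y g - Y (g * Equiv.swap u v)) * exp (θ * Y g)
      ≤ θ * exp (40 * A * θ) * (∑ g, (Y g - Y (g * Equiv.swap u v)) * Y g) *
        ∑ g, exp (θ * Y g) := by
    intro u v
    rw [hsymm (fun g => exp (θ * Y g)) u v, hsymm Y u v]
    have h1 : ∑ g, (Y g - Y (g * Equiv.swap u v)) *
        (exp (θ * Y g) - exp (θ * Y (g * Equiv.swap u v)))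
        ≤ θ * ∑ g, (Y g - Y (g * Equiv.swap u v)) ^ 2 * exp (θ * Y g) := by
      have h2 := sum_mul_swap (fun g => (Y g - Y (g * Equiv.swap u v)) ^ 2 * exp (θ * Y g))
        (Equiv.swap u v)
      simp only [mul_assoc, Equiv.swap_mul_self, mul_one] at h2
      have h3 : ∑ g, (Y g - Y (g * Equiv.swap u v)) *
        (exp (θ * Y g) - exp (θ * Y (g * Equiv.swap u v))) ≤
        ∑ g, (θ / 2 * ((Y g - Y (g * Equiv.swap u v)) ^ 2 * exp (θ * Y g))
          + θ / 2 * ((Y (g * Equiv.swap u v) - Y g) ^ 2 * exp (θ * Y (g * Equiv.swap u v)))) := by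
        refine Finset.sum_le_sum fun g _ => ?_
        have := exp_ineq (θ * Y g) (θ * Y (g * Equiv.swap u v))
        apply le_of_mul_le_mul_left _ hθ
        linarith
      rw [Finset.sum_add_distrib, ← Finset.mul_sum, ← Finset.mul_sum, h2] at h3
      linarith
    have h4 := decouple b A hA0 hA p u v θ hθ.le
      (fun g => (Y g - Y (g * Equiv.swap u v)) ^ 2) (fun g => sq_nonneg _)
      (fun g h hgh => by simp only [hY]; rw [D_local b p g h u v hgh])
    have h5 : (∑ g, (Y g - Y (g * Equiv.swap u v)) * (Y g - Y (g * Equiv.swap u v)))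
        = ∑ g, (Y g - Y (g * Equiv.swap u v)) ^ 2 :=
      Finset.sum_congr rfl fun g _ => (sq _).symm
    rw [h5]
    have hf : (0 : ℝ) ≤ Nat.factorial n := Nat.cast_nonneg _
    have h6 := mul_le_mul_of_nonneg_left h1 hf
    have h7 := mul_le_mul_of_nonneg_left h4 hθ.le
    linarith
  have hsum := Finset.sum_le_sum fun u (_ : u ∈ Finset.univ) =>
    Finset.sum_le_sum fun v (_ : v ∈ Finset.univ) => hpair u v
  simp only [← Finset.mul_sum, ← Finset.sum_mul] at hsum
  have g1 := heig (fun g => exp (θ * Y g))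
  have g2 := heig Y
  rw [g1, g2] at hsum
  have h8 : ∑ g, Y g * Y g = ∑ g, Y g ^ 2 := Finset.sum_congr rfl fun g _ => (sq _).symm
  rw [h8] at hsum
  have h9 : (0 : ℝ) < 4 * ((n : ℝ) - 1) := by linarith
  apply le_of_mul_le_mul_left _ h9
  linarith

theorem mgf_bound_s15 {n : ℕ} (hn : 5 ≤ n) (b : Fin n → Fin n → ℝ) (A : ℝ) (hA0 : 0 ≤ A)
    (hA : ∀ i j, |b i j| ≤ A) (hs : ∀ i j, b i j = b j i)
    (hd : ∀ i, b i i = 0) (hr : ∀ i, ∑ j, b i j = 0) (p : Equiv.Perm (Fin n))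
    (hp : ∀ i, p i ≠ i ∧ p (p i) ≠ i) (S : ℝ)
    (hS : (∑ i, ∑ j, b i j ^ 2) ≤ ((n : ℝ) - 1) * S)
    (θ₀ : ℝ) (hθ₀ : 0 ≤ θ₀) (hθ1 : 40 * A * θ₀ < 1) :
    ∑ g, exp (θ₀ * Yst b p g) ≤
      (Nat.factorial n : ℝ) * exp (S / (1 - 40 * A * θ₀) * θ₀ ^ 2 / 2) := by
  have hn' : (5 : ℝ) ≤ n := by exact_mod_cast hn
  set Y := Yst b p with hY
  set K := S / (1 - 40 * A * θ₀) with hK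
  have hf : (0 : ℝ) < Nat.factorial n := by exact_mod_cast Nat.factorial_pos n
  have hvar : ∑ g, Y g ^ 2 ≤ Nat.factorial n * S := by
    have h1 := var_Y hn b hs hd hr p hp
    have h2 := mul_le_mul_of_nonneg_left hS hf.le
    have h3 : (0 : ℝ) < (n : ℝ) - 1 := by linarith
    apply le_of_mul_le_mul_left _ h3
    linarith
  have hS0 : 0 ≤ S := by
    have : 0 ≤ ∑ g, Y g ^ 2 := Finset.sum_nonneg fun g _ => sq_nonneg _
    by_contra h
    push Not at h
    nlinarith
  have hm0 : ∀ θ, 0 ≤ ∑ g, exp (θ * Y g) := fun θ => Finset.sum_nonneg fun g _ => (exp_pos _).le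
  have hm' : ∀ θ, 0 < θ → θ < θ₀ →
      ∑ g, Y g * exp (θ * Y g) ≤ K * θ * ∑ g, exp (θ * Y g) := by
    intro θ h0 h1
    have h2 := mgf_deriv_bound hn b A hA0 hA hs hd hr p (fun i => (hp i).1) θ h0
    have h3 : exp (40 * A * θ) ≤ 1 / (1 - 40 * A * θ₀) := by
      have hle : 40 * A * θ ≤ 40 * A * θ₀ := mul_le_mul_of_nonneg_left h1.le (by linarith)
      rw [le_div_iff₀ (by linarith)]
      have h4 := Real.add_one_le_exp (-(40 * A * θ))
      calc exp (40 * A * θ) * (1 - 40 * A * θ₀) ≤ exp (40 * A * θ) * exp (-(40 * A * θ)) :=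
            mul_le_mul_of_nonneg_left (by linarith) (exp_pos _).le
        _ = 1 := by rw [← exp_add]; simp
    apply le_of_mul_le_mul_left _ hf
    refine h2.trans ?_
    have h5 : exp (40 * A * θ) * ∑ g, Y g ^ 2 ≤ 1 / (1 - 40 * A * θ₀) * (Nat.factorial n * S) :=
      mul_le_mul h3 hvar (Finset.sum_nonneg fun g _ => sq_nonneg _)
        (div_nonneg zero_le_one (by linarith))
    calc _ = (exp (40 * A * θ) * ∑ g, Y g ^ 2) * (θ * ∑ g, exp (θ * Y g)) := by ring
      _ ≤ (1 / (1 - 40 * A * θ₀) * (Nat.factorial n * S)) * (θ * ∑ g, exp (θ * Y g)) :=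
        mul_le_mul_of_nonneg_right h5 (mul_nonneg h0.le (hm0 θ))
      _ = _ := by rw [hK]; ring
  set φ : ℝ → ℝ := fun θ => (∑ g, exp (θ * Y g)) * exp (-(K * θ ^ 2 / 2)) with hφ
  have hder : ∀ θ, HasDerivAt φ ((∑ g, exp (θ * Y g) * Y g) * exp (-(K * θ ^ 2 / 2))
      + (∑ g, exp (θ * Y g)) * (exp (-(K * θ ^ 2 / 2)) * (-(K * θ)))) θ := by
    intro θ
    apply HasDerivAt.mul
    · apply HasDerivAt.fun_sum
      intro g _
      have := ((hasDerivAt_id θ).mul_const (Y g)).exp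
      simpa using this
    · have h1 : HasDerivAt (fun θ : ℝ => -(K * θ ^ 2 / 2)) (-(K * θ)) θ := by
        have := (((hasDerivAt_pow 2 θ).const_mul K).div_const 2).neg
        refine HasDerivAt.congr_deriv this ?_
        push_cast; ring
      exact h1.exp
  have hanti : AntitoneOn φ (Set.Icc 0 θ₀) := by
    apply antitoneOn_of_deriv_nonpos (convex_Icc _ _)
    · exact fun x _ => (hder x).continuousAt.continuousWithinAt
    · exact fun x _ => (hder x).differentiableAt.differentiableWithinAt
    · intro x hx
      rw [interior_Icc] at hx
      rw [(hder x).deriv]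
      have h1 := hm' x hx.1 hx.2
      have h2 : ∑ g, exp (x * Y g) * Y g = ∑ g, Y g * exp (x * Y g) :=
        Finset.sum_congr rfl fun g _ => mul_comm _ _
      rw [h2]
      have h3 := mul_le_mul_of_nonneg_right h1 (exp_pos (-(K * x ^ 2 / 2))).le
      linarith
  have hfin := hanti (Set.left_mem_Icc.2 hθ₀) (Set.right_mem_Icc.2 hθ₀) hθ₀
  have hz : φ 0 = Nat.factorial n := by
    change (∑ g, exp (0 * Y g)) * exp (-(K * 0 ^ 2 / 2)) = _
    simp [Finset.card_univ, Fintype.card_perm]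
  rw [hz] at hfin
  have h4 := mul_le_mul_of_nonneg_right hfin (exp_pos (K * θ₀ ^ 2 / 2)).le
  change (∑ g, exp (θ₀ * Y g)) * exp (-(K * θ₀ ^ 2 / 2)) * exp (K * θ₀ ^ 2 / 2) ≤ _ at h4
  rwa [mul_assoc, ← exp_add, neg_add_cancel, exp_zero, mul_one] at h4

theorem tail_count_s15 {n : ℕ} (hn : 5 ≤ n) (b : Fin n → Fin n → ℝ) (A : ℝ) (hA0 : 0 ≤ A)
    (hA : ∀ i j, |b i j| ≤ A) (hs : ∀ i j, b i j = b j i)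
    (hd : ∀ i, b i i = 0) (hr : ∀ i, ∑ j, b i j = 0) (p : Equiv.Perm (Fin n))
    (hp : ∀ i, p i ≠ i ∧ p (p i) ≠ i) (S : ℝ) (hS0 : 0 < S)
    (hS : (∑ i, ∑ j, b i j ^ 2) ≤ ((n : ℝ) - 1) * S) (t : ℝ) (ht : 0 ≤ t) :
    ∑ g, (if t ≤ Yst b p g then (1 : ℝ) else 0) ≤
      (Nat.factorial n : ℝ) * exp (-(t ^ 2) / (2 * (S + 40 * A * t))) := by
  have hpos : 0 < S + 40 * A * t := by positivity
  set θ := t / (S + 40 * A * t) with hθ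
  have hθ0 : 0 ≤ θ := by positivity
  have h1 : 1 - 40 * A * θ = S / (S + 40 * A * t) := by
    rw [hθ]; field_simp; ring
  have h2 : 40 * A * θ < 1 := by
    have : 0 < S / (S + 40 * A * t) := by positivity
    linarith
  have h3 := mgf_bound_s15 hn b A hA0 hA hs hd hr p hp S hS θ hθ0 h2
  have h4 : ∑ g, (if t ≤ Yst b p g then (1 : ℝ) else 0)
      ≤ ∑ g, exp (-(θ * t)) * exp (θ * Yst b p g) := by
    refine Finset.sum_le_sum fun g _ => ?_
    split_ifs with h
    · rw [← exp_add]
      apply Real.one_le_exp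
      nlinarith
    · positivity
  rw [← Finset.mul_sum] at h4
  refine h4.trans ((mul_le_mul_of_nonneg_left h3 (exp_pos _).le).trans (le_of_eq ?_))
  rw [mul_left_comm, ← exp_add, h1]
  congr 2
  rw [hθ]
  field_simp
  ring

theorem transfer {n : ℕ} (μ : Measure (Equiv.Perm (Fin n))) [IsProbabilityMeasure μ]
    (hconst : ∀ τ τ' : Equiv.Perm (Fin n), τ.cycleType = τ'.cycleType →
      μ {τ} = μ {τ'})
    (hnofix : ∀ᵐ p ∂μ, ∀ i, p i ≠ i ∧ p (p i) ≠ i)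
    (Q : Equiv.Perm (Fin n) → Prop) [DecidablePred Q] (C : ℝ)
    (hQ : ∀ p : Equiv.Perm (Fin n), (∀ i, p i ≠ i ∧ p (p i) ≠ i) →
      ∑ g : Equiv.Perm (Fin n), (if Q (g * p * g⁻¹) then (1 : ℝ) else 0)
        ≤ (Nat.factorial n : ℝ) * C) :
    (μ {p | Q p}).toReal ≤ C := by
  have : MeasurableSingletonClass (Equiv.Perm (Fin n)) := ⟨fun _ => trivial⟩
  set w : Equiv.Perm (Fin n) → ℝ := fun p => μ.real {p} with hw
  have hw1 : ∑ p, w p = 1 := by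
    rw [hw, sum_measureReal_singleton]; simp
  have hwQ : (μ {p | Q p}).toReal = ∑ p, w p * (if Q p then 1 else 0) := by
    have : {p | Q p} = ((Finset.univ.filter Q : Finset (Equiv.Perm (Fin n))) :
        Set (Equiv.Perm (Fin n))) := by ext; simp
    rw [this]
    change μ.real _ = _
    rw [← sum_measureReal_singleton, Finset.sum_filter]
    exact Finset.sum_congr rfl fun p _ => by split_ifs <;> simp [hw]
  have hconj : ∀ g p : Equiv.Perm (Fin n), w (g * p * g⁻¹) = w p := by
    intro g p
    simp only [hw, measureReal_def]
    rw [hconst (g * p * g⁻¹) p (Equiv.Perm.cycleType_conj)]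
  have hbad : ∀ p : Equiv.Perm (Fin n), ¬ (∀ i, p i ≠ i ∧ p (p i) ≠ i) → w p = 0 := by
    intro p hp
    have h0 := ae_iff.1 hnofix
    have : μ {p} = 0 := measure_mono_null (Set.singleton_subset_iff.2 hp) h0
    simp [hw, measureReal_def, this]
  have hf : (0 : ℝ) < Nat.factorial n := by exact_mod_cast Nat.factorial_pos n
  apply le_of_mul_le_mul_left _ hf
  rw [hwQ]
  have e1 : (Nat.factorial n : ℝ) * ∑ p, w p * (if Q p then (1 : ℝ) else 0)
      = ∑ g : Equiv.Perm (Fin n), ∑ p, w p * (if Q (g * p * g⁻¹) then (1 : ℝ) else 0) := by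
    have : ∀ g : Equiv.Perm (Fin n), ∑ p, w p * (if Q (g * p * g⁻¹) then (1 : ℝ) else 0)
        = ∑ p, w p * (if Q p then (1 : ℝ) else 0) := by
      intro g
      rw [← Equiv.sum_comp (MulAut.conj g).toEquiv (fun p => w p * (if Q p then (1 : ℝ) else 0))]
      refine Finset.sum_congr rfl fun p _ => ?_
      change _ = w (g * p * g⁻¹) * (if Q (g * p * g⁻¹) then (1 : ℝ) else 0)
      rw [hconj]
    rw [Finset.sum_congr rfl fun g _ => this g]
    simp [Finset.card_univ, Fintype.card_perm]
  rw [e1, Finset.sum_comm]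
  calc _ ≤ ∑ p, w p * ((Nat.factorial n : ℝ) * C) := by
        refine Finset.sum_le_sum fun p _ => ?_
        rw [← Finset.mul_sum]
        by_cases hp : ∀ i, p i ≠ i ∧ p (p i) ≠ i
        · exact mul_le_mul_of_nonneg_left (hQ p hp) measureReal_nonneg
        · simp [hbad p hp]
    _ = _ := by rw [← Finset.sum_mul, hw1, one_mul]

theorem Yst_conj {n : ℕ} (b : Fin n → Fin n → ℝ) (p g : Equiv.Perm (Fin n)) :
    ∑ i, b i ((g * p * g⁻¹) i) = Yst b p g := by
  unfold Yst
  rw [← Equiv.sum_comp g (fun i => b i ((g * p * g⁻¹) i))]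
  simp

/-- The symmetrised, centred array. -/
noncomputable def bArr (n : ℕ) (a : Fin n → Fin n → ℝ) (i j : Fin n) : ℝ :=
  if i = j then 0 else a i j - aio n a i - aio n a j + aoo n a

theorem sum_aio (n : ℕ) (hn : 5 ≤ n) (a : Fin n → Fin n → ℝ) :
    ∑ i, aio n a i = ((n : ℝ) - 1) * aoo n a := by
  have hn' : (5 : ℝ) ≤ n := by exact_mod_cast hn
  unfold aio aoo
  rw [← Finset.mul_sum]
  have h5 : (n : ℝ) - 2 ≠ 0 := by linarith
  have h6 : (n : ℝ) - 1 ≠ 0 := by linarith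
  field_simp

theorem bArr_row (n : ℕ) (hn : 5 ≤ n) (a : Fin n → Fin n → ℝ) (i : Fin n) :
    ∑ j, bArr n a i j = 0 := by
  have hn' : (5 : ℝ) ≤ n := by exact_mod_cast hn
  have h1 : ∀ j, bArr n a i j = (if j ≠ i then a i j else 0)
      + (- aio n a i - aio n a j + aoo n a) + (if j = i then 2 * aio n a i - aoo n a else 0) := by
    intro j
    unfold bArr
    by_cases h : i = j
    · subst h; simp; ring
    · simp [h, Ne.symm h]; ring
  have h2 : ∑ j ∈ Finset.univ.filter (· ≠ i), a i j = ((n : ℝ) - 2) * aio n a i := by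
    have h5 : (n : ℝ) - 2 ≠ 0 := by linarith
    unfold aio; field_simp
  rw [Finset.sum_congr rfl fun j _ => h1 j]
  simp only [Finset.sum_add_distrib, Finset.sum_sub_distrib, Finset.sum_ite_eq', Finset.mem_univ,
    if_true, Finset.sum_const, Finset.card_univ, Fintype.card_fin, nsmul_eq_mul, sum_aio n hn]
  rw [← Finset.sum_filter, h2]
  ring

theorem bArr_sum (n : ℕ) (hn : 5 ≤ n) (a : Fin n → Fin n → ℝ) (p : Equiv.Perm (Fin n))
    (hp : ∀ i, p i ≠ i) :
    ∑ i, bArr n a i (p i) = (∑ i, a i (p i)) - ((n : ℝ) - 2) * aoo n a := by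
  have h1 : ∀ i, bArr n a i (p i) = a i (p i) - aio n a i - aio n a (p i) + aoo n a := by
    intro i; simp [bArr, (hp i).symm]
  rw [Finset.sum_congr rfl fun j _ => h1 j]
  simp only [Finset.sum_add_distrib, Finset.sum_sub_distrib, Equiv.sum_comp p (aio n a),
    Finset.sum_const, Finset.card_univ, Fintype.card_fin, nsmul_eq_mul, sum_aio n hn]
  ring

theorem bArr_sq (n : ℕ) (hn : 5 ≤ n) (a : Fin n → Fin n → ℝ)
    (hsym : ∀ i j, i ≠ j → a i j = a j i) :
    ∑ i, ∑ j, bArr n a i j ^ 2 ≤ ((n : ℝ) - 1) * sigmaF2 n a := by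
  have hn' : (5 : ℝ) ≤ n := by exact_mod_cast hn
  have h6 : (n : ℝ) - 1 ≠ 0 := by linarith
  set d : Fin n → Fin n → ℝ := fun i j =>
    if j ≠ i then (a i j - 2 * aio n a i + aoo n a) ^ 2 else 0 with hd
  have h1 : ((n : ℝ) - 1) * sigmaF2 n a = ∑ i, ∑ j, d i j := by
    unfold sigmaF2
    rw [← mul_assoc, mul_one_div_cancel h6, one_mul]
    exact Finset.sum_congr rfl fun i _ => Finset.sum_filter _ _
  have h2 : ∑ i, ∑ j, d i j = ∑ i, ∑ j, (d i j + d j i) / 2 := by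
    have : ∑ i, ∑ j, d j i = ∑ i, ∑ j, d i j := Finset.sum_comm
    simp only [← Finset.sum_div, Finset.sum_add_distrib, this]
    ring
  rw [h1, h2]
  refine Finset.sum_le_sum fun i _ => Finset.sum_le_sum fun j _ => ?_
  by_cases h : i = j
  · simp [bArr, hd, h]
  · simp only [bArr, hd, h, Ne.symm h, hsym j i (Ne.symm h), ne_eq, not_false_eq_true, if_true,
      if_false]
    nlinarith [sq_nonneg (aio n a i - aio n a j)]

theorem bArr_abs (n : ℕ) (a : Fin n → Fin n → ℝ)
    (hsym : ∀ i j, i ≠ j → a i j = a j i) (ao : ℝ) (h0 : 0 ≤ ao)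
    (hao : ∀ i j, i ≠ j → |a i j - 2 * aio n a i + aoo n a| ≤ ao) (i j : Fin n) :
    |bArr n a i j| ≤ ao := by
  by_cases h : i = j
  · simp [bArr, h, h0]
  · have h1 := abs_le.1 (hao i j h)
    have h2 := abs_le.1 (hao j i (Ne.symm h))
    have h3 := hsym i j h
    simp only [bArr, h, if_false]
    rw [abs_le]
    constructor <;> linarith

theorem hoeffding_cycle_type_concentration (n : ℕ) (hn : 5 ≤ n)
    (a : Fin n → Fin n → ℝ) (hsym : ∀ i j, i ≠ j → a i j = a j i)
    (hσ : 0 < sigmaF2 n a)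
    (μ : Measure (Equiv.Perm (Fin n))) [IsProbabilityMeasure μ]
    (hconst : ∀ τ τ' : Equiv.Perm (Fin n), τ.cycleType = τ'.cycleType →
      μ {τ} = μ {τ'})
    (hnofix : ∀ᵐ p ∂μ, ∀ i, p i ≠ i ∧ p (p i) ≠ i)
    (ao : ℝ)
    (hao : IsGreatest {x : ℝ | ∃ i j, i ≠ j ∧ x = |a i j - 2 * aio n a i + aoo n a|} ao) :
    ∀ t : ℝ, 0 ≤ t →
      (μ {p | t ≤ (∑ i, a i (p i)) - ((n : ℝ) - 2) * aoo n a}).toReal ≤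
          Real.exp (-(t ^ 2) / (2 * (sigmaF2 n a + 40 * ao * t))) ∧
        (μ {p | (∑ i, a i (p i)) - ((n : ℝ) - 2) * aoo n a ≤ -t}).toReal ≤
          Real.exp (-(t ^ 2) / (2 * (sigmaF2 n a + 40 * ao * t))) := by

  intro t ht
  have hub : ∀ i j, i ≠ j → |a i j - 2 * aio n a i + aoo n a| ≤ ao :=
    fun i j h => hao.2 ⟨i, j, h, rfl⟩
  have h0 : 0 ≤ ao := by
    obtain ⟨i, j, _, h⟩ := hao.1
    rw [h]; exact abs_nonneg _
  have hs : ∀ i j, bArr n a i j = bArr n a j i := by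
    intro i j
    by_cases h : i = j
    · rw [h]
    · simp only [bArr, h, Ne.symm h, if_false, hsym i j h]; ring
  have hd : ∀ i, bArr n a i i = 0 := fun i => by simp [bArr]
  have hr := bArr_row n hn a
  have hsq := bArr_sq n hn a hsym
  have hab := bArr_abs n a hsym ao h0 hub
  have hval : ∀ p g : Equiv.Perm (Fin n), (∀ i, p i ≠ i ∧ p (p i) ≠ i) →
      (∑ i, a i ((g * p * g⁻¹) i)) - ((n : ℝ) - 2) * aoo n a = Yst (bArr n a) p g := by
    intro p g hp
    rw [← Yst_conj, bArr_sum n hn]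
    intro i h
    refine (hp (g⁻¹ i)).1 (g.injective ?_)
    simpa using h
  constructor
  · classical
    refine transfer μ hconst hnofix _ _ fun p hp => ?_
    have := tail_count_s15 hn (bArr n a) ao h0 hab hs hd hr p hp (sigmaF2 n a) hσ hsq t ht
    refine le_trans (le_of_eq ?_) this
    exact Finset.sum_congr rfl fun g _ => by rw [hval p g hp]
  · classical
    refine transfer μ hconst hnofix _ _ fun p hp => ?_
    have := tail_count_s15 hn (fun i j => - bArr n a i j) ao h0 (fun i j => by rw [abs_neg]; exact hab i j)
      (fun i j => by rw [hs]) (fun i => by rw [hd, neg_zero])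
      (fun i => by rw [Finset.sum_neg_distrib, hr, neg_zero]) p hp (sigmaF2 n a) hσ
      (by simpa using hsq) t ht
    refine le_trans (le_of_eq ?_) this
    refine Finset.sum_congr rfl fun g _ => ?_
    rw [hval p g hp]
    have : Yst (fun i j => - bArr n a i j) p g = - Yst (bArr n a) p g := by
      simp [Yst]
    rw [this]
    simp only [le_neg]
end
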